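/- Let G be a graph with minimum degree δ and C a longest cycle in G. If c̄ denotes the length of a longest cycle in G \ C (the number of vertices of such a cycle, with vertices counting as cycles of length 1 and edges as cycles of length 2), then |C| ≥ (c̄ + 1)(δ − c̄ + 1). -/

import Mathlib

open SimpleGraph

variable {V : Type*}

/-- `G` is `k`-connected: more than `k` vertices and removing fewer than `k`
vertices leaves a connected graph. -/
def KConnected (G : SimpleGraph V) [Fintype V] (k : ℕ) : Prop :=
  k < Fintype.card V ∧
    ∀ S : Finset V, S.card < k → (G.induce ((↑S : Set V)ᶜ)).Connected

/-- vertex connectivity `κ`. -/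
noncomputable def connectivity (G : SimpleGraph V) [Fintype V] : ℕ :=
  sSup {k | KConnected G k}

/-- independence number `α`. -/
noncomputable def indepNumber (G : SimpleGraph V) [Fintype V] : ℕ :=
  sSup {k | ∃ s : Finset V, (∀ u ∈ s, ∀ v ∈ s, ¬ G.Adj u v) ∧ s.card = k}

/-- circumference `c`: length of a longest cycle. -/
noncomputable def circumference (G : SimpleGraph V) [Fintype V] : ℕ :=
  sSup {n | ∃ (v : V) (w : G.Walk v v), w.IsCycle ∧ w.length = n}

/-- `w` is a longest cycle of `G`. -/
def IsLongestCycle {G : SimpleGraph V} {v : V} (w : G.Walk v v) : Prop :=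
  w.IsCycle ∧ ∀ (u : V) (w' : G.Walk u u), w'.IsCycle → w'.length ≤ w.length

/-- dominating cycle: every edge has an endpoint on the cycle. -/
def IsDominatingCycle {G : SimpleGraph V} {v : V} (w : G.Walk v v) : Prop :=
  w.IsCycle ∧ ∀ x y, G.Adj x y → x ∈ w.support ∨ y ∈ w.support

/-- generalized cycle of length `n` with vertex set `W`: single vertices are
cycles of length 1, edges are cycles of length 2. -/
def ExtCycle (G : SimpleGraph V) (W : Set V) (n : ℕ) : Prop :=
  (n = 1 ∧ ∃ v : V, W = {v}) ∨
  (n = 2 ∧ ∃ u v : V, G.Adj u v ∧ W = {u, v}) ∨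
  (3 ≤ n ∧ ∃ (v : V) (w : G.Walk v v), w.IsCycle ∧ w.length = n ∧
      W = {x | x ∈ w.support})

/-- `p̄`: the length of a longest path in `G \ C`. -/
noncomputable def pathBar (G : SimpleGraph V) [Fintype V] {v : V} (w : G.Walk v v) : ℕ :=
  sSup {n | ∃ (a b : {x : V | x ∉ w.support})
      (p : (G.induce {x : V | x ∉ w.support}).Walk a b), p.IsPath ∧ p.length = n}

/-- `c̄`: the length of a longest (generalized) cycle in `G \ C`. -/
noncomputable def cycBar (G : SimpleGraph V) [Fintype V] {v : V} (w : G.Walk v v) : ℕ :=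
  sSup {n | ∃ W, ExtCycle (G.induce {x : V | x ∉ w.support}) W n}

/-- `CD_m`-cycle: every (generalized) cycle of length at least `m` meets `w`. -/
def IsCDCycle (G : SimpleGraph V) {v : V} (w : G.Walk v v) (m : ℕ) : Prop :=
  w.IsCycle ∧ ∀ (W : Set V) (n : ℕ), ExtCycle G W n → m ≤ n → ∃ x ∈ W, x ∈ w.support


/-! ### Lists as paths and generalized cycles -/

/-- a list which is a path from `a` to `b`. -/
structure PathL {α : Type*} (R : SimpleGraph α) (l : List α) (a b : α) : Prop where
  chain : l.IsChain R.Adj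
  nodup : l.Nodup
  head : l.head? = some a
  last : l.getLast? = some b

/-- a list which is a generalized cycle. -/
structure GCyc {α : Type*} (R : SimpleGraph α) (l : List α) : Prop where
  chain : l.IsChain R.Adj
  nodup : l.Nodup
  closed : 3 ≤ l.length → ∀ a ∈ l.getLast?, ∀ b ∈ l.head?, R.Adj a b

theorem PathL.append {α : Type*} {R : SimpleGraph α} {l l' : List α} {a b c d : α}
    (h : PathL R l a b) (h' : PathL R l' c d) (hbc : R.Adj b c)
    (hd : ∀ x ∈ l, x ∉ l') : PathL R (l ++ l') a d := by
  obtain ⟨h1, h2, h3, h4⟩ := h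
  obtain ⟨h1', h2', h3', h4'⟩ := h'
  refine ⟨?_, ?_, ?_, ?_⟩
  · rw [List.isChain_append]
    refine ⟨h1, h1', ?_⟩
    intro x hx y hy
    rw [h4] at hx; rw [h3'] at hy
    simp at hx hy
    subst hx; subst hy; exact hbc
  · rw [List.nodup_append]
    refine ⟨h2, h2', ?_⟩
    rintro x hx y hy rfl
    exact hd x hx hy
  · rw [List.head?_append, h3]; rfl
  · rw [List.getLast?_append, h4']; rfl

theorem PathL.reverse {α : Type*} {R : SimpleGraph α} {l : List α} {a b : α}
    (h : PathL R l a b) : PathL R l.reverse b a := by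
  obtain ⟨h1, h2, h3, h4⟩ := h
  refine ⟨?_, ?_, ?_, ?_⟩
  · rw [List.isChain_reverse]
    exact h1.imp (fun x y hxy => hxy.symm)
  · exact List.nodup_reverse.2 h2
  · rw [List.head?_reverse, h4]
  · rw [List.getLast?_reverse, h3]

theorem PathL.single {α : Type*} (R : SimpleGraph α) (a : α) : PathL R [a] a a :=
  ⟨by simp, by simp, by simp, by simp⟩

theorem PathL.gcyc {α : Type*} {R : SimpleGraph α} {l : List α} {a b : α}
    (h : PathL R l a b) (hab : 3 ≤ l.length → R.Adj b a) : GCyc R l := by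
  refine ⟨h.chain, h.nodup, ?_⟩
  intro h3 x hx y hy
  rw [h.last] at hx; rw [h.head] at hy
  simp at hx hy
  subst hx; subst hy; exact hab h3

theorem PathL.map {α β : Type*} {R : SimpleGraph α} {S : SimpleGraph β} {l : List α} {a b : α}
    (f : α → β) (hf : Function.Injective f) (hR : ∀ x y, R.Adj x y → S.Adj (f x) (f y))
    (h : PathL R l a b) : PathL S (l.map f) (f a) (f b) := by
  refine ⟨?_, h.nodup.map hf, ?_, ?_⟩
  · rw [List.isChain_map]
    exact h.chain.imp (fun x y hxy => hR x y hxy)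
  · rw [List.head?_map, h.head]; rfl
  · rw [List.getLast?_map, h.last]; rfl

theorem PathL.head_mem {α : Type*} {R : SimpleGraph α} {l : List α} {a b : α}
    (h : PathL R l a b) : a ∈ l := List.mem_of_head? h.head

theorem PathL.last_mem {α : Type*} {R : SimpleGraph α} {l : List α} {a b : α}
    (h : PathL R l a b) : b ∈ l := List.mem_of_getLast? h.last

/-- the slice `x s, …, x t`. -/
def slice {α : Type*} (x : ℕ → α) (s t : ℕ) : List α := (List.range' s (t + 1 - s)).map x

theorem length_slice {α : Type*} (x : ℕ → α) (s t : ℕ) : (slice x s t).length = t + 1 - s := by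
  simp [slice]

theorem mem_slice {α : Type*} {x : ℕ → α} {s t : ℕ} {a : α} :
    a ∈ slice x s t ↔ ∃ i, s ≤ i ∧ i ≤ t ∧ x i = a := by
  simp only [slice, List.mem_map, List.mem_range'_1]
  constructor
  · rintro ⟨i, hi, rfl⟩; exact ⟨i, by omega, by omega, rfl⟩
  · rintro ⟨i, h1, h2, rfl⟩; exact ⟨i, by omega, rfl⟩

theorem slice_path {α : Type*} (R : SimpleGraph α) (x : ℕ → α) (s t : ℕ) (hst : s ≤ t)
    (hinj : ∀ i j, s ≤ i → i ≤ t → s ≤ j → j ≤ t → x i = x j → i = j)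
    (hadj : ∀ i, s ≤ i → i < t → R.Adj (x i) (x (i + 1))) :
    PathL R (slice x s t) (x s) (x t) := by
  refine ⟨?_, ?_, ?_, ?_⟩
  · unfold slice
    rw [List.isChain_map, List.isChain_iff_getElem]
    intro i hi
    simp only [List.length_range'] at hi
    simp only [List.getElem_range', one_mul]
    have := hadj (s + i) (by omega) (by omega)
    simpa [add_assoc] using this
  · unfold slice
    apply List.Nodup.map_on _ (List.nodup_range')
    intro i hi j hj hij
    rw [List.mem_range'_1] at hi hj
    exact hinj i j (by omega) (by omega) (by omega) (by omega) hij
  · unfold slice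
    have : t + 1 - s = (t - s) + 1 := by omega
    rw [this, List.range'_succ]; simp
  · unfold slice
    have : t + 1 - s = (t - s) + 1 := by omega
    rw [this, List.range'_concat]; simp
    congr 1; omega

/-- a cyclic sequence of length `h`. -/
structure CycSeq {α : Type*} (R : SimpleGraph α) (h : ℕ) (u : ℕ → α) : Prop where
  per : ∀ k, u (k + h) = u k
  inj : ∀ k k', u k = u k' → k % h = k' % h
  cyc : 2 ≤ h → ∀ k, R.Adj (u k) (u (k + 1))

theorem mod_eq_close {h a b : ℕ} (h1 : a % h = b % h) (hab : a ≤ b) (hb : b < a + h) : a = b := by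
  obtain ⟨c, rfl⟩ := Nat.exists_eq_add_of_le hab
  have h2 : c % h = 0 := by
    have : (a + 0) ≡ a + c [MOD h] := h1
    have := Nat.ModEq.add_left_cancel' a this
    exact this.symm
  rw [Nat.mod_eq_of_lt (by omega)] at h2
  omega

theorem CycSeq.arc {α : Type*} {R : SimpleGraph α} {h : ℕ} {u : ℕ → α} (hu : CycSeq R h u)
    (s t : ℕ) (hst : s ≤ t) (hth : t < s + h) : PathL R (slice u s t) (u s) (u t) := by
  apply slice_path R u s t hst
  · intro i j h1 h2 h3 h4 hij
    have := hu.inj i j hij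
    rcases le_total i j with hl | hl
    · exact mod_eq_close this hl (by omega)
    · exact (mod_eq_close this.symm hl (by omega)).symm
  · intro i h1 h2
    exact hu.cyc (by omega) i

theorem CycSeq.rep {α : Type*} {R : SimpleGraph α} {h : ℕ} {u : ℕ → α} (hu : CycSeq R h u)
    (hmax : ∀ l, GCyc R l → l.length ≤ h) (s t : ℕ) (hst : s < t) (hth : t < s + h)
    (q : List α) (hq : PathL R q (u s) (u t)) (h3 : 3 ≤ q.length)
    (hH : ∀ k, u k ∈ q → u k = u s ∨ u k = u t) : q.length ≤ t - s + 1 := by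
  by_cases ht : t + 1 = s + h
  · have := hmax q (hq.gcyc (fun _ => by
      have := hu.cyc (by omega) t
      rw [ht, hu.per] at this; exact this))
    omega
  · have harc := hu.arc (t + 1) (s + h - 1) (by omega) (by omega)
    have hp := hq.append harc (hu.cyc (by omega) t) (by
      intro x hx hx'
      rw [mem_slice] at hx'
      obtain ⟨i, hi1, hi2, rfl⟩ := hx'
      rcases hH i hx with h5 | h5
      · have := hu.inj _ _ h5
        have := mod_eq_close this.symm (by omega) (by omega)
        omega
      · have := hu.inj _ _ h5
        have := mod_eq_close this.symm (by omega) (by omega)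
        omega)
    have := hmax _ (hp.gcyc (fun _ => by
      have := hu.cyc (by omega) (s + h - 1)
      have h6 : s + h - 1 + 1 = s + h := by omega
      rw [h6, hu.per] at this; exact this))
    rw [List.length_append, length_slice] at this
    omega

/-- cyclic distance at least `L` -/
def CD (h k k' L : ℕ) : Prop := (L + k ≤ k' ∨ L + k' ≤ k) ∧ L + k ≤ k' + h ∧ L + k' ≤ k + h

theorem CD.symm {h k k' L : ℕ} (H : CD h k k' L) : CD h k' k L := by
  unfold CD at *; omega

theorem CycSeq.repD {α : Type*} {R : SimpleGraph α} {h : ℕ} {u : ℕ → α} (hu : CycSeq R h u)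
    (hmax : ∀ l, GCyc R l → l.length ≤ h) (s t : ℕ) (hst : s ≠ t) (hs : s < h) (ht : t < h)
    (q : List α) (hq : PathL R q (u s) (u t)) (h3 : 3 ≤ q.length)
    (hH : ∀ k, u k ∈ q → u k = u s ∨ u k = u t) : CD h s t (q.length - 1) := by
  have key : ∀ (s t : ℕ) (q : List α), s < t → t < h → PathL R q (u s) (u t) → 3 ≤ q.length →
      (∀ k, u k ∈ q → u k = u s ∨ u k = u t) → CD h s t (q.length - 1) := by
    intro s t q hst ht hq h3 hH
    have h1 := hu.rep hmax s t hst (by omega) q hq h3 hH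
    have h2 := hu.rep hmax t (s + h) (by omega) (by omega) q.reverse (by
      rw [hu.per]; exact hq.reverse) (by simpa using h3) (by
      intro k hk
      rw [hu.per]
      exact (hH k (by simpa using hk)).symm)
    rw [List.length_reverse] at h2
    unfold CD; omega
  rcases lt_or_gt_of_ne hst with hl | hl
  · exact key s t q hl ht hq h3 hH
  · have := key t s q.reverse hl hs hq.reverse (by simpa using h3) (fun k hk =>
      (hH k (by simpa using hk)).symm)
    rw [List.length_reverse] at this
    exact this.symm

/-! ### The numeric lemma -/

theorem last_att (c : ℕ → ℕ) (att : ℕ → Prop) (h0 : att 0) (hc : ∀ k, ¬ att k → c k = 0) (k : ℕ) :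
    ∃ k1, k1 < k + 1 ∧ att k1 ∧ ∑ l ∈ Finset.range (k + 1), c l = ∑ l ∈ Finset.range k1, c l + c k1 ∧
      ∀ l, k1 < l → l < k + 1 → ¬ att l := by
  induction k with
  | zero => exact ⟨0, by omega, h0, by simp, by intros; omega⟩
  | succ k ih =>
    by_cases hk : att (k + 1)
    · exact ⟨k + 1, by omega, hk, by rw [Finset.sum_range_succ], by intros; omega⟩
    · obtain ⟨k1, h1, h2, h3, h4⟩ := ih
      refine ⟨k1, by omega, h2, ?_, ?_⟩
      · rw [Finset.sum_range_succ, h3, hc _ hk]; rfl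
      · intro l hl1 hl2
        by_cases hl : l = k + 1
        · rw [hl]; exact hk
        · exact h4 l hl1 (by omega)

theorem num_prefix (h X : ℕ) (c mn : ℕ → ℕ) (low high : ℕ → Prop) (hlow0 : low 0)
    (hhigh0 : ¬ high 0) (hc0 : c 0 = 0) (hmn0 : mn 0 = 1)
    (hatt : ∀ k, ¬ (low k ∨ high k) → c k = 0)
    (hL : ∀ k k', k < k' → k' < h → low k → low k' → k + mn k' + c k' + 1 ≤ k' + mn k)
    (hH : ∀ k k', k < k' → k' < h → low k → high k' → X + 3 + c k' + 2 * k ≤ 2 * k' + 2 * mn k)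
    (hHH : ∀ k k', 0 < k → k < k' → k' < h → (low k ∨ high k) → (low k' ∨ high k') →
      c k + c k' + 2 * k ≤ 2 * k') (k : ℕ) : k < h →
    (low k → (∀ l ≤ k, ¬ high l) → ∑ l ∈ Finset.range k, c l + c k + mn k ≤ k + 1) ∧
    ((low k ∨ high k) → (∃ l ≤ k, high l) →
      2 * ∑ l ∈ Finset.range k, c l + c k + X + 1 ≤ 2 * k) := by
  induction k using Nat.strong_induction_on with
  | _ k ih =>
  intro hk
  rcases k with _ | k
  · constructor
    · intro _ _; simp [hc0, hmn0]
    · rintro _ ⟨l, hl, hl'⟩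
      have : l = 0 := by omega
      subst this; exact absurd hl' hhigh0
  · obtain ⟨k1, h1, h2, h3, h4⟩ := last_att c (fun k => low k ∨ high k) (Or.inl hlow0) hatt k
    obtain ⟨i1, i2⟩ := ih k1 h1 (by omega)
    rw [h3]
    constructor
    · intro hlk hno
      have hl1 : low k1 := by
        rcases h2 with h | h
        · exact h
        · exact absurd h (hno k1 (by omega))
      have := i1 hl1 (fun l hl => hno l (by omega))
      have := hL k1 (k + 1) h1 hk hl1 hlk
      omega
    · intro hak hex
      by_cases hex1 : ∃ l ≤ k1, high l
      · have := i2 h2 hex1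
        have hk1 : 0 < k1 := by
          rcases Nat.eq_zero_or_pos k1 with h | h
          · obtain ⟨l, hl, hl'⟩ := hex1
            have : l = 0 := by omega
            subst this; exact absurd hl' hhigh0
          · exact h
        have := hHH k1 (k + 1) hk1 h1 hk h2 hak
        omega
      · push Not at hex1
        obtain ⟨l, hl, hl'⟩ := hex
        have hlk : l = k + 1 := by
          by_contra hne
          rcases lt_or_ge k1 l with h | h
          · exact h4 l h (by omega) (Or.inr hl')
          · exact hex1 l h hl'
        subst hlk
        have hl1 : low k1 := by
          rcases h2 with h | h
          · exact h
          · exact absurd h (hex1 k1 le_rfl)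
        have := i1 hl1 hex1
        have := hH k1 (k + 1) h1 hk hl1 hl'
        omega

theorem num_main (h X : ℕ) (c mn : ℕ → ℕ) (low high : ℕ → Prop) (hlow0 : low 0)
    (hhigh0 : ¬ high 0) (hc0 : c 0 = 0) (hmn0 : mn 0 = 1)
    (hatt : ∀ k, ¬ (low k ∨ high k) → c k = 0)
    (hL : ∀ k k', k ≠ k' → k < h → k' < h → k' ≠ 0 → low k → low k' →
      ∃ L, CD h k k' L ∧ mn k' + c k' + 1 ≤ L + mn k)
    (hH : ∀ k k', k ≠ k' → k < h → k' < h → low k → high k' →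
      ∃ L, CD h k k' L ∧ X + 3 + c k' ≤ 2 * L + 2 * mn k)
    (hHH : ∀ k k', k ≠ 0 → k' ≠ 0 → k ≠ k' → k < h → k' < h → (low k ∨ high k) → (low k' ∨ high k') →
      ∃ L, CD h k k' L ∧ c k + c k' ≤ 2 * L)
    (k0 : ℕ) (hk0 : k0 < h) (hhk0 : high k0) :
    ∑ l ∈ Finset.range h, c l + X + 1 ≤ h := by
  have hpos : k0 ≠ 0 := by rintro rfl; exact hhigh0 hhk0
  have p1 := (num_prefix h X c mn low high hlow0 hhigh0 hc0 hmn0 hatt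
    (by
      intro k k' h1 h2 h3 h4
      obtain ⟨L, hL1, hL2⟩ := hL k k' (by omega) (by omega) h2 (by omega) h3 h4
      unfold CD at hL1; omega)
    (by
      intro k k' h1 h2 h3 h4
      obtain ⟨L, hL1, hL2⟩ := hH k k' (by omega) (by omega) h2 h3 h4
      unfold CD at hL1; omega)
    (by
      intro k k' h0 h1 h2 h3 h4
      obtain ⟨L, hL1, hL2⟩ := hHH k k' (by omega) (by omega) (by omega) (by omega) h2 h3 h4
      unfold CD at hL1; omega) k0 hk0).2 (Or.inr hhk0) ⟨k0, le_rfl, hhk0⟩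
  set r : ℕ → ℕ := fun k => if k = 0 then 0 else h - k with hr
  have r0 : r 0 = 0 := by simp [hr]
  have r1 : ∀ k, k ≠ 0 → r k = h - k := by intro k hk; simp [hr, hk]
  have hk0' : r (h - k0) = k0 := by rw [r1 _ (by omega)]; omega
  have p2 := (num_prefix h X (c ∘ r) (mn ∘ r) (low ∘ r) (high ∘ r) (by simpa [r0] using hlow0)
    (by simpa [r0] using hhigh0) (by simpa [r0] using hc0) (by simpa [r0] using hmn0)
    (fun k hk => hatt (r k) hk)
    (by
      intro k k' h1 h2 h3 h4
      have e2 := r1 k' (by omega)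
      rcases Nat.eq_zero_or_pos k with h0 | h0
      · subst h0
        obtain ⟨L, hL1, hL2⟩ := hL (r 0) (r k') (by omega) (by omega) (by omega) (by omega) h3 h4
        unfold CD at hL1; simp only [Function.comp]; omega
      · have e1 := r1 k (by omega)
        obtain ⟨L, hL1, hL2⟩ := hL (r k) (r k') (by omega) (by omega) (by omega) (by omega) h3 h4
        unfold CD at hL1; simp only [Function.comp]; omega)
    (by
      intro k k' h1 h2 h3 h4
      have e2 := r1 k' (by omega)
      rcases Nat.eq_zero_or_pos k with h0 | h0
      · subst h0
        obtain ⟨L, hL1, hL2⟩ := hH (r 0) (r k') (by omega) (by omega) (by omega) h3 h4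
        unfold CD at hL1; simp only [Function.comp]; omega
      · have e1 := r1 k (by omega)
        obtain ⟨L, hL1, hL2⟩ := hH (r k) (r k') (by omega) (by omega) (by omega) h3 h4
        unfold CD at hL1; simp only [Function.comp]; omega)
    (by
      intro k k' h0 h1 h2 h3 h4
      have e2 := r1 k' (by omega)
      have e1 := r1 k (by omega)
      obtain ⟨L, hL1, hL2⟩ := hHH (r k) (r k') (by omega) (by omega) (by omega) (by omega) (by omega) h3 h4
      unfold CD at hL1; simp only [Function.comp]; omega) (h - k0) (by omega)).2
      (Or.inr (by simpa [hk0'] using hhk0)) ⟨h - k0, le_rfl, by simpa [hk0'] using hhk0⟩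
  have hsum : ∀ m, m < h → ∑ l ∈ Finset.range (m + 1), c (r l) + ∑ l ∈ Finset.range (h - m), c l
      = ∑ l ∈ Finset.range h, c l := by
    intro m
    induction m with
    | zero => intro _; simp [r0, hc0]
    | succ m ih =>
      intro hm
      have e := ih (by omega)
      have e1 : h - m = (h - (m + 1)) + 1 := by omega
      rw [e1, Finset.sum_range_succ c] at e
      rw [Finset.sum_range_succ, r1 (m + 1) (by omega)]
      omega
  have hs := hsum (h - k0 - 1) (by omega)
  have e1 : h - k0 - 1 + 1 = h - k0 := by omega
  have e2 : h - (h - k0 - 1) = k0 + 1 := by omega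
  rw [e1, e2, Finset.sum_range_succ] at hs
  simp only [Function.comp, hk0'] at p2
  omega

/-! ### The numeric row lemma -/

theorem finset_min_max (D : Finset ℕ) : ∃ mn mx, D.Nonempty → mn ∈ D ∧ mx ∈ D ∧ mn ≤ mx ∧
    D.card + mn ≤ mx + 1 ∧ ∀ p ∈ D, mn ≤ p ∧ p ≤ mx := by
  by_cases h : D.Nonempty
  · refine ⟨D.min' h, D.max' h, fun _ => ⟨D.min'_mem h, D.max'_mem h,
      D.min'_le _ (D.max'_mem h), ?_, fun p hp => ⟨D.min'_le _ hp, D.le_max' _ hp⟩⟩⟩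
    have h1 : D ⊆ Finset.Icc (D.min' h) (D.max' h) := by
      intro p hp
      rw [Finset.mem_Icc]
      exact ⟨D.min'_le _ hp, D.le_max' _ hp⟩
    have h2 := Finset.card_le_card h1
    rw [Nat.card_Icc] at h2
    have := D.min'_le _ (D.max'_mem h)
    omega
  · exact ⟨0, 0, fun h' => absurd h' h⟩

theorem CD.max {h k k' L L' : ℕ} (h1 : CD h k k' L) (h2 : CD h k k' L') :
    ∃ M, CD h k k' M ∧ L ≤ M ∧ L' ≤ M ∧ L + L' ≤ 2 * M := by
  rcases le_total L L' with h | h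
  · exact ⟨L', h2, h, le_rfl, by omega⟩
  · exact ⟨L, h1, le_rfl, h, by omega⟩

theorem row_num (h e y0 : ℕ) (D A : ℕ → Finset ℕ) (Xs : Finset ℕ) (hy0 : y0 ∈ Xs)
    (hXs : ∀ y ∈ Xs, y0 ≤ y ∧ y < e) (hD0 : D 0 = {1}) (hA0 : A 0 = ∅)
    (hD : ∀ k, ∀ p ∈ D k, 1 ≤ p ∧ p ≤ e)
    (hB : ∀ k, k ≠ 0 → (A k).Nonempty → (e ∈ D k ∧ (A k).card = 1) ∨ D k = ∅)
    (hA : ∀ k, k ≠ 0 → e ∈ D k → (A k).Nonempty)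
    (F1 : ∀ k k', k ≠ k' → k < h → k' < h → ∀ p ∈ D k, ∀ p' ∈ D k', p ≤ p' → CD h k k' (p' - p + 2))
    (F2 : ∀ k k', k ≠ k' → k < h → k' < h → ∀ p ∈ D k, ∀ p' ∈ D k', ∀ y ∈ Xs, p ≤ y → y < p' →
      CD h k k' (y - p + 1 + (e - p') + 2))
    (F2' : ∀ k', k' ≠ 0 → k' < h → 0 ∈ Xs → ∀ p' ∈ D k', CD h 0 k' (e - p' + 2))
    (F3 : ∀ k k', k ≠ k' → k < h → k' < h → k' ≠ 0 → ∀ p ∈ D k, ∀ t' ∈ A k',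
      CD h k k' (e - p + t' + 2))
    (F4 : ∀ k k', k ≠ k' → k < h → k' < h → k ≠ 0 → k' ≠ 0 → ∀ t ∈ A k, ∀ t' ∈ A k',
      CD h k k' (t + t' + 2)) :
    ((∃ k, k ≠ 0 ∧ k < h ∧ ((A k).Nonempty ∨ ∃ p ∈ D k, y0 < p)) →
      ∑ k ∈ Finset.range h, (if k = 0 then 0 else (A k).card + (D k).card) + Xs.card + 1 ≤ h) ∧
    ((∀ k, k ≠ 0 → k < h → A k = ∅) → (∃ k, k ≠ 0 ∧ k < h ∧ (D k).Nonempty) →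
      ∑ k ∈ Finset.range h, (if k = 0 ∨ D k = ∅ then 0 else (D k).card + 1) + 2 ≤ h) := by
  choose mn mx hm using fun k => finset_min_max (D k)
  have hXe : Xs.card ≤ e := by
    have : Xs ⊆ Finset.range e := fun y hy => Finset.mem_range.2 (hXs y hy).2
    simpa using Finset.card_le_card this
  have hDe : ∀ k, (D k).card ≤ e := by
    intro k
    have : D k ⊆ Finset.Icc 1 e := fun p hp => Finset.mem_Icc.2 (hD k p hp)
    simpa using Finset.card_le_card this
  have F1' : ∀ k k', k ≠ k' → k < h → k' < h → ∀ p ∈ D k, ∀ p' ∈ D k',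
      ∃ L, CD h k k' L ∧ p' + 2 ≤ L + p ∧ p + 2 ≤ L + p' := by
    intro k k' hk h1 h2 p hp p' hp'
    rcases le_total p p' with hl | hl
    · exact ⟨_, F1 k k' hk h1 h2 p hp p' hp' hl, by omega, by omega⟩
    · exact ⟨_, (F1 k' k hk.symm h2 h1 p' hp' p hp hl).symm, by omega, by omega⟩
  have mn0 : mn 0 = 1 := by
    have := (hm 0 (by simp [hD0])).1
    rw [hD0] at this; simpa using this
  have AA : ∀ k k', k ≠ k' → k < h → k' < h → (D k).Nonempty → (D k').Nonempty →
      ∃ L, CD h k k' L ∧ (D k).card + (D k').card + 2 ≤ 2 * L := by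
    intro k k' hk h1 h2 hn hn'
    obtain ⟨a1, a2, a3, a4, -⟩ := hm k hn
    obtain ⟨b1, b2, b3, b4, -⟩ := hm k' hn'
    obtain ⟨L1, c1, c2, c3⟩ := F1' k k' hk h1 h2 _ a1 _ b2
    obtain ⟨L2, d1, d2, d3⟩ := F1' k k' hk h1 h2 _ a2 _ b1
    obtain ⟨M, e1, e2, e3, e4⟩ := c1.max d1
    exact ⟨M, e1, by omega⟩
  have tau : ∀ k, (A k).Nonempty → ∃ t ∈ A k, (A k).card ≤ t + 1 := by
    intro k hn
    obtain ⟨a, b, hab⟩ := finset_min_max (A k)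
    obtain ⟨h1, h2, h3, h4, -⟩ := hab hn
    exact ⟨b, h2, by omega⟩
  constructor
  · rintro ⟨k0, hk0, hk0h, hk0'⟩
    have := num_main h Xs.card (fun k => if k = 0 ∨ h ≤ k then 0 else (A k).card + (D k).card) mn
      (fun k => k = 0 ∨ (k < h ∧ A k = ∅ ∧ (D k).Nonempty ∧ ∀ p ∈ D k, p ≤ y0))
      (fun k => k ≠ 0 ∧ k < h ∧ ((A k).Nonempty ∨ ∃ p ∈ D k, y0 < p))
      (Or.inl rfl) (by simp) (by simp) mn0 ?_ ?_ ?_ ?_ k0 hk0h ⟨hk0, hk0h, hk0'⟩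
    · have e1 : ∑ k ∈ Finset.range h, (if k = 0 then 0 else (A k).card + (D k).card)
          = ∑ k ∈ Finset.range h, (if k = 0 ∨ h ≤ k then 0 else (A k).card + (D k).card) := by
        apply Finset.sum_congr rfl
        intro k hk
        have := Finset.mem_range.1 hk
        have h5 : ¬ (h ≤ k) := by omega
        simp [h5]
      rw [e1]; exact this
    · intro k hk
      push Not at hk
      obtain ⟨hk1, hk2⟩ := hk
      by_cases h3 : k = 0 ∨ h ≤ k
      · simp [h3]
      · have h4 : k ≠ 0 := by omega
        have h5 : k < h := by omega
        obtain ⟨h6, h7⟩ := hk2 h4 h5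
        have h8 := hk1.2 h5 h6
        by_cases h9 : (D k).Nonempty
        · obtain ⟨p, hp, hp'⟩ := h8 h9
          have := h7 p hp
          omega
        · rw [Finset.not_nonempty_iff_eq_empty] at h9
          simp [h6, h9]
    · -- hL
      intro k k' hk h1 h2 hk'0 hl hl'
      have n' : (D k').Nonempty := by
        rcases hl' with h3 | h3
        · exact absurd h3 hk'0
        · exact h3.2.2.1
      have a' : A k' = ∅ := by
        rcases hl' with h3 | h3
        · exact absurd h3 hk'0
        · exact h3.2.1
      have n : (D k).Nonempty := by
        rcases hl with h3 | h3
        · rw [h3, hD0]; simp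
        · exact h3.2.2.1
      obtain ⟨a1, a2, a3, a4, -⟩ := hm k n
      obtain ⟨b1, b2, b3, b4, -⟩ := hm k' n'
      obtain ⟨L1, c1, c2, c3⟩ := F1' k k' hk h1 h2 _ a1 _ b2
      refine ⟨L1, c1, ?_⟩
      have h5 : ¬ (k' = 0 ∨ h ≤ k') := by omega
      simp only [h5, if_false, a', Finset.card_empty]
      omega
    · -- hH
      rintro k k' hk h1 h2 hl ⟨hk'0, -, hh⟩
      have n : (D k).Nonempty := by
        rcases hl with h3 | h3
        · rw [h3, hD0]; simp
        · exact h3.2.2.1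
      obtain ⟨a1, a2, a3, a4, -⟩ := hm k n
      have hmnpos := hD k _ a1
      have h5 : ¬ (k' = 0 ∨ h ≤ k') := by omega
      simp only [h5, if_false]
      by_cases hAk : (A k').Nonempty
      · obtain ⟨t, ht, ht'⟩ := tau k' hAk
        refine ⟨_, F3 k k' hk h1 h2 hk'0 _ a1 t ht, ?_⟩
        have := hDe k'
        rcases hB k' hk'0 hAk with h6 | h6
        · omega
        · rw [h6, Finset.card_empty]; omega
      · obtain ⟨p, hp, hp'⟩ : ∃ p ∈ D k', y0 < p := by tauto
        obtain ⟨b1, b2, b3, b4, b5⟩ := hm k' ⟨p, hp⟩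
        have b6 := hD k' _ b1
        have b7 := hD k' _ b2
        have b8 := (b5 p hp).2
        set p' := mx k' with hp'def
        have A0 : A k' = ∅ := Finset.not_nonempty_iff_eq_empty.1 hAk
        obtain ⟨y1, y, hy⟩ := finset_min_max (Xs.filter (· < p'))
        obtain ⟨-, hy2, -, -, hy5⟩ := hy ⟨y0, by simp [hy0]; omega⟩
        have hyX := (Finset.mem_filter.1 hy2).1
        have hyp := (Finset.mem_filter.1 hy2).2
        have hXcard : Xs.card ≤ y + 1 + (e - p') := by
          have : Xs ⊆ Finset.range (y + 1) ∪ Finset.Ico p' e := by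
            intro q hq
            rw [Finset.mem_union, Finset.mem_range, Finset.mem_Ico]
            by_cases hqp : q < p'
            · left
              have := (hy5 q (Finset.mem_filter.2 ⟨hq, hqp⟩)).2
              omega
            · right
              have := (hXs q hq).2
              omega
          have h7 := Finset.card_le_card this
          have h8 := Finset.card_union_le (Finset.range (y + 1)) (Finset.Ico p' e)
          rw [Finset.card_range, Nat.card_Ico] at h8
          omega
        have hy0y := (hXs y hyX).1
        rw [A0, Finset.card_empty]
        obtain ⟨L1, c1, c2, c3⟩ := F1' k k' hk h1 h2 _ a1 _ b2
        by_cases hmy : mn k ≤ y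
        · have c4 := F2 k k' hk h1 h2 _ a1 _ b2 y hyX hmy hyp
          obtain ⟨M, e1, e2, e3, e4⟩ := c1.max c4
          exact ⟨M, e1, by omega⟩
        · have hk0' : k = 0 := by
            rcases hl with h3 | h3
            · exact h3
            · have := h3.2.2.2 _ a1
              omega
          subst hk0'
          have hyz : y = 0 := by omega
          rw [hyz] at hyX
          have c4 := F2' k' hk'0 h2 hyX _ b2
          obtain ⟨M, e1, e2, e3, e4⟩ := c1.max c4
          exact ⟨M, e1, by omega⟩
    · -- hHH
      intro k k' hk0 hk0' hk h1 h2 hatt hatt'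
      have ne : ∀ k, k ≠ 0 → ((k = 0 ∨ (k < h ∧ A k = ∅ ∧ (D k).Nonempty ∧ ∀ p ∈ D k, p ≤ y0)) ∨
          (k ≠ 0 ∧ k < h ∧ ((A k).Nonempty ∨ ∃ p ∈ D k, y0 < p))) →
          A k = ∅ ∧ (D k).Nonempty ∨ (A k).Nonempty := by
        intro k hk h3
        rcases Finset.eq_empty_or_nonempty (A k) with h4 | h4
        · left
          refine ⟨h4, ?_⟩
          rcases h3 with (h3 | h3) | h3
          · exact absurd h3 hk
          · exact h3.2.2.1
          · rcases h3.2.2 with h5 | ⟨p, hp, -⟩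
            · rw [h4] at h5; simp at h5
            · exact ⟨p, hp⟩
        · right; exact h4
      have m1 := ne k hk0 hatt
      have m2 := ne k' hk0' hatt'
      have h5 : ¬ (k = 0 ∨ h ≤ k) := by omega
      have h5' : ¬ (k' = 0 ∨ h ≤ k') := by omega
      simp only [h5, h5', if_false]
      have mixed : ∀ k k', k ≠ 0 → k' ≠ 0 → k ≠ k' → k < h → k' < h → A k = ∅ → (D k).Nonempty →
          (A k').Nonempty → ∃ L, CD h k k' L ∧
          (A k).card + (D k).card + ((A k').card + (D k').card) ≤ 2 * L := by
        intro k k' hk0 hk0' hk h1 h2 hAk n n'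
        obtain ⟨t, ht, ht'⟩ := tau k' n'
        obtain ⟨a1, a2, a3, a4, -⟩ := hm k n
        have hlt : mx k < e := by
          have := (hD k _ a2).2
          rcases Nat.lt_or_ge (mx k) e with h6 | h6
          · exact h6
          · have h7 : mx k = e := by omega
            rw [h7] at a2
            have := hA k hk0 a2
            rw [hAk] at this; simp at this
        have c1 := F3 k k' hk h1 h2 hk0' _ a1 t ht
        rw [hAk, Finset.card_empty]
        rcases hB k' hk0' n' with ⟨h6, h7⟩ | h6
        · obtain ⟨b1, b2, b3, b4, b5⟩ := hm k' ⟨e, h6⟩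
          have := (hD k' _ b2).2
          obtain ⟨L1, d1, d2, d3⟩ := F1' k k' hk h1 h2 _ a2 _ b1
          obtain ⟨M, e1, e2, e3, e4⟩ := c1.max d1
          exact ⟨M, e1, by omega⟩
        · refine ⟨_, c1, ?_⟩
          rw [h6, Finset.card_empty]; omega
      rcases m1 with ⟨m1, m1'⟩ | m1 <;> rcases m2 with ⟨m2, m2'⟩ | m2
      · obtain ⟨L, hL1, hL2⟩ := AA k k' hk h1 h2 m1' m2'
        refine ⟨L, hL1, ?_⟩
        rw [m1, m2, Finset.card_empty]; omega
      · exact mixed k k' hk0 hk0' hk h1 h2 m1 m1' m2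
      · obtain ⟨L, hL1, hL2⟩ := mixed k' k hk0' hk0 hk.symm h2 h1 m2 m2' m1
        exact ⟨L, hL1.symm, by omega⟩
      · obtain ⟨t, ht, ht'⟩ := tau k m1
        obtain ⟨t', htt, htt'⟩ := tau k' m2
        rcases hB k hk0 m1 with ⟨h6, h7⟩ | h6 <;> rcases hB k' hk0' m2 with ⟨h8, h9⟩ | h8
        · obtain ⟨a1, a2, a3, a4, -⟩ := hm k ⟨_, h6⟩
          obtain ⟨b1, b2, b3, b4, -⟩ := hm k' ⟨_, h8⟩
          have := (hD k _ a2).2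
          have := (hD k' _ b2).2
          have c1 := F3 k k' hk h1 h2 hk0' _ a1 t' htt
          have c2 := (F3 k' k hk.symm h2 h1 hk0 _ b1 t ht).symm
          obtain ⟨M, e1, e2, e3, e4⟩ := c1.max c2
          exact ⟨M, e1, by omega⟩
        · obtain ⟨a1, a2, a3, a4, -⟩ := hm k ⟨_, h6⟩
          have := (hD k _ a2).2
          have c1 := F3 k k' hk h1 h2 hk0' _ a1 t' htt
          refine ⟨_, c1, ?_⟩
          rw [h8, Finset.card_empty]; omega
        · obtain ⟨b1, b2, b3, b4, -⟩ := hm k' ⟨_, h8⟩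
          have := (hD k' _ b2).2
          have c2 := (F3 k' k hk.symm h2 h1 hk0 _ b1 t ht).symm
          refine ⟨_, c2, ?_⟩
          rw [h6, Finset.card_empty]; omega
        · refine ⟨_, F4 k k' hk h1 h2 hk0 hk0' t ht t' htt, ?_⟩
          rw [h6, h8, Finset.card_empty]; omega
  · rintro hnoA ⟨k0, hk0, hk0h, hk0'⟩
    have := num_main h 1 (fun k => if k = 0 ∨ D k = ∅ then 0 else (D k).card + 1) (fun _ => 1)
      (fun k => k = 0) (fun k => k ≠ 0 ∧ (D k).Nonempty) rfl (by simp) (by simp) rfl ?_ ?_ ?_ ?_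
      k0 hk0h ⟨hk0, hk0'⟩
    · omega
    · intro k hk
      push Not at hk
      by_cases h1 : k = 0
      · simp [h1]
      · simp [hk.2 h1]
    · intro k k' hk h1 h2 hk0 hl hl'
      exact absurd hl' hk0
    · rintro k k' hk h1 h2 rfl ⟨hk'0, n⟩
      obtain ⟨b1, b2, b3, b4, -⟩ := hm k' n
      have := (hD k' _ b1).1
      have h3 : ¬ (k' = 0 ∨ D k' = ∅) := by
        rintro (h3 | h3)
        · exact hk'0 h3
        · rw [h3] at n; simp at n
      simp only [h3, if_false]
      have h4 : 0 < (D k').card := Finset.card_pos.2 n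
      refine ⟨_, F1 0 k' hk h1 h2 1 (by simp [hD0]) _ b2 (by omega), by omega⟩
    · intro k k' hk0 hk0' hk h1 h2 ha ha'
      have n : (D k).Nonempty := by tauto
      have n' : (D k').Nonempty := by tauto
      have h3 : ¬ (k = 0 ∨ D k = ∅) := by
        rintro (h3 | h3)
        · exact hk0 h3
        · rw [h3] at n; simp at n
      have h3' : ¬ (k' = 0 ∨ D k' = ∅) := by
        rintro (h3 | h3)
        · exact hk0' h3
        · rw [h3] at n'; simp at n'
      simp only [h3, h3', if_false]
      obtain ⟨L, hL1, hL2⟩ := AA k k' hk h1 h2 n n'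
      exact ⟨L, hL1, by omega⟩

/-! ### Systems of disjoint paths hanging off a cycle -/

/-- a system of disjoint paths starting on a cycle -/
structure Sys {α : Type*} (R : SimpleGraph α) (h : ℕ) (x : ℕ → ℕ → α) (e : ℕ → ℕ) : Prop where
  per : ∀ k, x (k + h) = x k
  eper : ∀ k, e (k + h) = e k
  inj : ∀ k k' τ τ', τ ≤ e k → τ' ≤ e k' → x k τ = x k' τ' → k % h = k' % h ∧ τ = τ'
  adj : ∀ k τ, τ < e k → R.Adj (x k τ) (x k (τ + 1))
  cyc : 2 ≤ h → ∀ k, R.Adj (x k 0) (x (k + 1) 0)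

theorem per_mod {β : Type*} (h : ℕ) (f : ℕ → β) (hf : ∀ k, f (k + h) = f k) (k : ℕ) :
    f (k % h) = f k := by
  have : ∀ m r, f (r + h * m) = f r := by
    intro m
    induction m with
    | zero => intro r; rfl
    | succ m ih => intro r; rw [Nat.mul_succ, ← add_assoc, hf, ih]
  conv_rhs => rw [← Nat.mod_add_div k h]
  rw [this]

theorem sum_shift (h : ℕ) (f : ℕ → ℕ) (hf : ∀ k, f (k + h) = f k) (j : ℕ) :
    ∑ k ∈ Finset.range h, f (k + j) = ∑ k ∈ Finset.range h, f k := by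
  induction j with
  | zero => rfl
  | succ j ih =>
    rw [← ih]
    have h1 := Finset.sum_range_succ (fun k => f (k + j)) h
    have h2 := Finset.sum_range_succ' (fun k => f (k + j)) h
    have h3 : f (h + j) = f (0 + j) := by rw [add_comm h j, hf, zero_add]
    have h4 : ∑ k ∈ Finset.range h, f (k + (j + 1)) = ∑ k ∈ Finset.range h, f (k + 1 + j) :=
      Finset.sum_congr rfl (fun k _ => by congr 1; omega)
    try simp only at h1 h2
    omega

namespace Sys

variable {α : Type*} {R : SimpleGraph α} {h : ℕ} {x : ℕ → ℕ → α} {e : ℕ → ℕ}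

theorem cycSeq (S : Sys R h x e) : CycSeq R h (fun k => x k 0) :=
  ⟨fun k => by simp only [S.per], fun k k' hk => (S.inj k k' 0 0 (Nat.zero_le _) (Nat.zero_le _) hk).1, S.cyc⟩

theorem shift (S : Sys R h x e) (j : ℕ) : Sys R h (fun k => x (k + j)) (fun k => e (k + j)) := by
  refine ⟨fun k => ?_, fun k => ?_, ?_, fun k τ hτ => S.adj _ τ hτ, fun h2 k => ?_⟩
  · have : k + h + j = k + j + h := by omega
    simp only [this, S.per]
  · have : k + h + j = k + j + h := by omega
    simp only [this, S.eper]
  · intro k k' τ τ' h1 h2 h3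
    obtain ⟨h4, h5⟩ := S.inj _ _ _ _ h1 h2 h3
    exact ⟨Nat.ModEq.add_right_cancel' j h4, h5⟩
  · have : k + 1 + j = k + j + 1 := by omega
    simp only [this]
    exact S.cyc h2 (k + j)

theorem update (S : Sys R h x e) (y : ℕ → α) (e' : ℕ) (hy0 : y 0 = x 0 0)
    (hinj : ∀ τ τ', τ ≤ e' → τ' ≤ e' → y τ = y τ' → τ = τ')
    (hadj : ∀ τ, τ < e' → R.Adj (y τ) (y (τ + 1)))
    (hdis : ∀ τ, τ ≤ e' → ∀ k τ', k % h ≠ 0 → τ' ≤ e k → y τ ≠ x k τ') :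
    Sys R h (fun k => if k % h = 0 then y else x k) (fun k => if k % h = 0 then e' else e k) := by
  have h0 : ∀ k, k % h = 0 → x k 0 = x 0 0 := by
    intro k hk
    have := per_mod h x S.per k
    rw [hk] at this; rw [this]
  have hz : ∀ k, (if k % h = 0 then y else x k) 0 = x k 0 := by
    intro k
    split_ifs with hk
    · rw [hy0, h0 k hk]
    · rfl
  refine ⟨fun k => ?_, fun k => ?_, ?_, ?_, ?_⟩
  · simp only [Nat.add_mod_right, S.per]
  · simp only [Nat.add_mod_right, S.eper]
  · intro k k' τ τ' h1 h2 h3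
    try simp only at h1 h2 h3
    by_cases hk : k % h = 0 <;> by_cases hk' : k' % h = 0
    · simp only [hk, hk', if_true] at h1 h2 h3
      exact ⟨by omega, hinj _ _ h1 h2 h3⟩
    · simp only [hk, hk', if_true, if_false] at h1 h2 h3
      exact absurd h3 (hdis _ h1 _ _ hk' h2)
    · simp only [hk, hk', if_true, if_false] at h1 h2 h3
      exact absurd h3.symm (hdis _ h2 _ _ hk h1)
    · simp only [hk, hk', if_false] at h1 h2 h3
      exact S.inj _ _ _ _ h1 h2 h3
  · intro k τ hτ
    try simp only at hτ ⊢
    by_cases hk : k % h = 0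
    · simp only [hk, if_true] at hτ ⊢; exact hadj τ hτ
    · simp only [hk, if_false] at hτ ⊢; exact S.adj k τ hτ
  · intro h2 k
    simp only [hz]
    exact S.cyc h2 k

end Sys

theorem sum_update (h : ℕ) (hh : 1 ≤ h) (e : ℕ → ℕ) (e' : ℕ) :
    ∑ k ∈ Finset.range h, (if k % h = 0 then e' else e k) + e 0 = ∑ k ∈ Finset.range h, e k + e' := by
  obtain ⟨m, rfl⟩ : ∃ m, h = m + 1 := ⟨h - 1, by omega⟩
  rw [Finset.sum_range_succ', Finset.sum_range_succ']
  have : ∑ k ∈ Finset.range m, (if (k + 1) % (m + 1) = 0 then e' else e (k + 1)) =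
      ∑ k ∈ Finset.range m, e (k + 1) := by
    apply Finset.sum_congr rfl
    intro k hk
    rw [Finset.mem_range] at hk
    rw [Nat.mod_eq_of_lt (by omega)]
    simp
  rw [this]; simp; omega

/-- maximal systems -/
def MaxSys {α : Type*} (R : SimpleGraph α) (h : ℕ) (x : ℕ → ℕ → α) (e : ℕ → ℕ) : Prop :=
  Sys R h x e ∧ ∀ x' e', Sys R h x' e' → ∑ k ∈ Finset.range h, e' k ≤ ∑ k ∈ Finset.range h, e k

theorem MaxSys.shift {α : Type*} {R : SimpleGraph α} {h : ℕ} {x : ℕ → ℕ → α} {e : ℕ → ℕ}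
    (S : MaxSys R h x e) (j : ℕ) : MaxSys R h (fun k => x (k + j)) (fun k => e (k + j)) := by
  refine ⟨S.1.shift j, ?_⟩
  rw [sum_shift h e S.1.eper]
  exact S.2

theorem Sys.sum_le {α : Type*} [Fintype α] {R : SimpleGraph α} {h : ℕ} {x : ℕ → ℕ → α} {e : ℕ → ℕ}
    (S : Sys R h x e) : ∑ k ∈ Finset.range h, e k ≤ Fintype.card α := by
  classical
  have h1 : ((Finset.range h).sigma (fun k => Finset.range (e k))).card ≤ Fintype.card α := by
    apply Finset.card_le_card_of_injOn (fun p => x p.1 p.2) (fun _ _ => Finset.mem_univ _)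
    rintro ⟨k, τ⟩ hp ⟨k', τ'⟩ hp' heq
    simp only [Finset.coe_sigma, Set.mem_sigma_iff, Finset.coe_range, Set.mem_Iio] at hp hp'
    obtain ⟨h1, h2⟩ := S.inj _ _ _ _ hp.2.le hp'.2.le heq
    rw [Nat.mod_eq_of_lt hp.1, Nat.mod_eq_of_lt hp'.1] at h1
    subst h1; subst h2; rfl
  simpa [Finset.card_sigma] using h1

theorem exists_max {α : Type*} [Fintype α] {R : SimpleGraph α} {h : ℕ} {u : ℕ → α}
    (hu : CycSeq R h u) : ∃ x e, MaxSys R h x e ∧ ∃ x' e', Sys R h x' e' := by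
  have h0 : Sys R h (fun k _ => u k) (fun _ => 0) := by
    refine ⟨fun k => by simp only [hu.per], fun _ => rfl, ?_, by simp, hu.cyc⟩
    intro k k' τ τ' h1 h2 h3
    exact ⟨hu.inj _ _ h3, by omega⟩
  let P : Set ℕ := {n | ∃ x e, Sys R h x e ∧ ∑ k ∈ Finset.range h, e k = n}
  have hne : P.Nonempty := ⟨_, _, _, h0, rfl⟩
  have hbd : BddAbove P := ⟨Fintype.card α, by rintro n ⟨x, e, S, rfl⟩; exact S.sum_le⟩
  obtain ⟨x, e, S, hS⟩ := Nat.sSup_mem hne hbd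
  refine ⟨x, e, ⟨S, ?_⟩, _, _, h0⟩
  intro x' e' S'
  rw [hS]
  exact le_csSup hbd ⟨x', e', S', rfl⟩

theorem MaxSys.closed {α : Type*} {R : SimpleGraph α} {h : ℕ} {x : ℕ → ℕ → α} {e : ℕ → ℕ}
    (S : MaxSys R h x e) (hh : 1 ≤ h) (v : α) (hv : R.Adj (x 0 (e 0)) v) :
    ∃ k, k < h ∧ ∃ τ, τ ≤ e k ∧ x k τ = v := by
  by_contra hcon
  push Not at hcon
  have hcon' : ∀ k τ, τ ≤ e k → x k τ ≠ v := by
    intro k τ hτ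
    rw [← per_mod h e S.1.eper] at hτ
    have := hcon (k % h) (Nat.mod_lt _ (by omega)) τ hτ
    rwa [per_mod h x S.1.per] at this
  have S' := S.1.update (fun τ => if τ ≤ e 0 then x 0 τ else v) (e 0 + 1) (by simp) (by
    intro τ τ' h1 h2 h3
    try simp only at h3
    split_ifs at h3 with h4 h5 h5
    · exact (S.1.inj _ _ _ _ h4 h5 h3).2
    · exact absurd h3 (hcon' _ _ h4)
    · exact absurd h3.symm (hcon' _ _ h5)
    · omega) (by
    intro τ hτ
    rcases Nat.lt_or_ge τ (e 0) with h1 | h1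
    · rw [if_pos (by omega), if_pos (by omega)]; exact S.1.adj _ _ h1
    · have : τ = e 0 := by omega
      subst this
      rw [if_pos (by omega), if_neg (by omega)]; exact hv) (by
    intro τ hτ k τ' hk hτ' heq
    split_ifs at heq with h1
    · have := (S.1.inj _ _ _ _ h1 hτ' heq).1
      rw [Nat.zero_mod] at this; omega
    · exact hcon' _ _ hτ' heq.symm)
  have h1 := S.2 _ _ S'
  have h2 := sum_update h hh e (e 0 + 1)
  omega

/-- general detour lemma -/
theorem Sys.rep3 {α : Type*} {R : SimpleGraph α} {h : ℕ} {x : ℕ → ℕ → α} {e : ℕ → ℕ}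
    (S : Sys R h x e) (hmax : ∀ l, GCyc R l → l.length ≤ h) (k k' τ τ' : ℕ) (hkk : k ≠ k')
    (hk : k < h) (hk' : k' < h) (hτ : τ ≤ e k) (hτ' : τ' ≤ e k') (h0 : k = 0 → τ = 0)
    (h0' : k' = 0 → τ' = 0) (M : List α) (a b : α) (hM : PathL R M a b)
    (hMr : ∀ v ∈ M, ∃ p, 1 ≤ p ∧ p ≤ e 0 ∧ x 0 p = v) (ha : R.Adj (x k τ) a)
    (hb : R.Adj b (x k' τ')) : CD h k k' (M.length + 1 + τ + τ') := by
  have row : ∀ k τ, τ ≤ e k → PathL R (slice (x k) 0 τ) (x k 0) (x k τ) := by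
    intro k τ hτ
    apply slice_path R _ _ _ (Nat.zero_le _)
    · intro i j _ h1 _ h2 h3
      exact (S.inj _ _ _ _ (by omega) (by omega) h3).2
    · intro i _ hi
      exact S.adj _ _ (by omega)
  have dis : ∀ k, k < h → ∀ τ, τ ≤ e k → (k = 0 → τ = 0) → ∀ i ≤ τ, x k i ∉ M := by
    intro k hk τ hτ h0 i hi hm
    obtain ⟨p, hp1, hp2, hp3⟩ := hMr _ hm
    obtain ⟨h4, h5⟩ := S.inj _ _ _ _ hp2 (by omega : i ≤ e k) hp3
    rw [Nat.mod_eq_of_lt hk, Nat.zero_mod] at h4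
    have := h0 h4.symm
    omega
  have hq := ((row k τ hτ).append hM ha (by
    intro v hv hv'
    rw [mem_slice] at hv
    obtain ⟨i, _, hi, rfl⟩ := hv
    exact dis k hk τ hτ h0 i hi hv')).append (row k' τ' hτ').reverse hb (by
    intro v hv hv'
    rw [List.mem_reverse, mem_slice] at hv'
    obtain ⟨i, _, hi, rfl⟩ := hv'
    rw [List.mem_append] at hv
    rcases hv with hv | hv
    · rw [mem_slice] at hv
      obtain ⟨j, _, hj, hji⟩ := hv
      have := (S.inj _ _ _ _ (by omega) (by omega) hji).1
      rw [Nat.mod_eq_of_lt hk, Nat.mod_eq_of_lt hk'] at this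
      exact hkk this
    · exact dis k' hk' τ' hτ' h0' i hi hv)
  have hMl : 1 ≤ M.length := List.length_pos_of_mem hM.head_mem
  have hlen : (slice (x k) 0 τ ++ M ++ (slice (x k') 0 τ').reverse).length = M.length + τ + τ' + 2 := by
    simp [length_slice]; omega
  have := S.cycSeq.repD hmax k k' hkk hk hk' _ hq (by omega) (by
    intro j hj
    simp only [List.mem_append, List.mem_reverse, mem_slice] at hj
    rcases hj with (⟨i, _, hi, hij⟩ | hj) | ⟨i, _, hi, hij⟩
    · left
      obtain ⟨h1, h2⟩ := S.inj _ _ _ _ (by omega) (by omega) hij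
      subst h2; exact hij.symm
    · obtain ⟨p, hp1, hp2, hp3⟩ := hMr _ hj
      have := (S.inj _ _ _ _ hp2 (Nat.zero_le _) hp3).2
      omega
    · right
      obtain ⟨h1, h2⟩ := S.inj _ _ _ _ (by omega) (by omega) hij
      subst h2; exact hij.symm)
  rw [hlen] at this
  unfold CD at *; omega

/-! ### The row lemma -/

open Classical in
/-- degree -/
noncomputable def dg {α : Type*} [Fintype α] (R : SimpleGraph α) (z : α) : ℕ :=
  (Finset.univ.filter (fun v => R.Adj z v)).card

open Classical in
/-- number of neighbours in a set -/
noncomputable def nb {α : Type*} [Fintype α] (R : SimpleGraph α) (z : α) (s : Set α) : ℕ :=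
  (Finset.univ.filter (fun v => R.Adj z v ∧ v ∈ s)).card

/-- the row without its first vertex -/
def rs {α : Type*} (x : ℕ → ℕ → α) (e : ℕ → ℕ) (j : ℕ) : Set α :=
  {v | ∃ p, 1 ≤ p ∧ p ≤ e j ∧ x j p = v}

open Classical in
/-- total number of edges from trivial rows to a set -/
noncomputable def QQ {α : Type*} [Fintype α] (R : SimpleGraph α) (h : ℕ) (x : ℕ → ℕ → α) (e : ℕ → ℕ)
    (s : Set α) : ℕ := ∑ k ∈ Finset.range h, if e k = 0 then nb R (x k 0) s else 0

open Classical in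
/-- trivial rows attached to a set -/
noncomputable def mm {α : Type*} [Fintype α] (R : SimpleGraph α) (h : ℕ) (x : ℕ → ℕ → α) (e : ℕ → ℕ)
    (s : Set α) : ℕ := ((Finset.range h).filter (fun k => e k = 0 ∧ 0 < nb R (x k 0) s)).card

theorem rowA {α : Type*} [Fintype α] {R : SimpleGraph α} {h : ℕ} {x : ℕ → ℕ → α} {e : ℕ → ℕ}
    (S : MaxSys R h x e) (hh : 1 ≤ h) (hmax : ∀ l, GCyc R l → l.length ≤ h) (he : 1 ≤ e 0) :
    dg R (x 0 (e 0)) + QQ R h x e (rs x e 0) + 1 ≤ h ∨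
    ((∀ v, R.Adj (x 0 (e 0)) v → ∃ p, p < e 0 ∧ x 0 p = v) ∧
      mm R h x e (rs x e 0) + 2 ≤ dg R (x 0 (e 0)) ∧ dg R (x 0 (e 0)) + 1 ≤ h) := by
  classical
  have S1 := S.1
  set z := x 0 (e 0) with hz
  set D : ℕ → Finset ℕ := fun k => if k = 0 then {1} else if e k = 0 then
    (Finset.Icc 1 (e 0)).filter (fun p => R.Adj (x k 0) (x 0 p)) else ∅ with hD
  set A : ℕ → Finset ℕ := fun k => if k = 0 then ∅ else
    (Finset.range (e k + 1)).filter (fun τ => R.Adj z (x k τ)) with hA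
  set Xs : Finset ℕ := (Finset.range (e 0)).filter (fun y => R.Adj z (x 0 y)) with hXs
  have hXne : Xs.Nonempty := ⟨e 0 - 1, by
    rw [hXs, Finset.mem_filter, Finset.mem_range]
    refine ⟨by omega, ?_⟩
    have := S1.adj 0 (e 0 - 1) (by omega)
    rw [Nat.sub_add_cancel he] at this
    exact this.symm⟩
  set y0 := Xs.min' hXne with hy0
  have hy0m : y0 ∈ Xs := Finset.min'_mem _ _
  have hXs' : ∀ y ∈ Xs, y0 ≤ y ∧ y < e 0 := by
    intro y hy
    refine ⟨Finset.min'_le _ _ hy, ?_⟩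
    rw [hXs, Finset.mem_filter, Finset.mem_range] at hy; exact hy.1
  have hXadj : ∀ y ∈ Xs, R.Adj z (x 0 y) := fun y hy => (Finset.mem_filter.1 hy).2
  have hDm : ∀ k, ∀ p ∈ D k, 1 ≤ p ∧ p ≤ e 0 ∧ R.Adj (x k 0) (x 0 p) ∧ (k ≠ 0 → e k = 0) := by
    intro k p hp
    by_cases hk : k = 0
    · subst hk
      simp only [hD, if_true, Finset.mem_singleton] at hp
      subst hp
      exact ⟨le_rfl, he, S1.adj 0 0 (by omega), by simp⟩
    · by_cases hek : e k = 0
      · simp only [hD, hk, hek, if_true, if_false, Finset.mem_filter, Finset.mem_Icc] at hp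
        exact ⟨hp.1.1, hp.1.2, hp.2, fun _ => hek⟩
      · simp [hD, hk, hek] at hp
  have hAm : ∀ k, ∀ t ∈ A k, k ≠ 0 ∧ t ≤ e k ∧ R.Adj z (x k t) := by
    intro k t ht
    by_cases hk : k = 0
    · simp [hA, hk] at ht
    · simp only [hA, hk, if_false, Finset.mem_filter, Finset.mem_range] at ht
      exact ⟨hk, by omega, ht.2⟩
  have rp : ∀ p p', p ≤ p' → p' ≤ e 0 → PathL R (slice (x 0) p p') (x 0 p) (x 0 p') := by
    intro p p' hp hp'
    apply slice_path R _ _ _ hp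
    · intro i j _ h1 _ h2 h3
      exact (S1.inj _ _ _ _ (by omega) (by omega) h3).2
    · intro i _ hi
      exact S1.adj _ _ (by omega)
  have rr : ∀ p p', 1 ≤ p → p' ≤ e 0 → ∀ v ∈ slice (x 0) p p', ∃ q, 1 ≤ q ∧ q ≤ e 0 ∧ x 0 q = v := by
    intro p p' h1 h2 v hv
    obtain ⟨i, h3, h4, h5⟩ := mem_slice.1 hv
    exact ⟨i, by omega, by omega, h5⟩
  have key := row_num h (e 0) y0 D A Xs hy0m hXs' (by simp [hD]) (by simp [hA])
    (fun k p hp => ⟨(hDm k p hp).1, (hDm k p hp).2.1⟩)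
    (by
      intro k hk hne
      by_cases hek : e k = 0
      · left
        obtain ⟨t, ht⟩ := hne
        obtain ⟨_, h1, h2⟩ := hAm k t ht
        have h3 : t = 0 := by omega
        subst h3
        refine ⟨?_, ?_⟩
        · simp only [hD, hk, hek, if_true, if_false, Finset.mem_filter, Finset.mem_Icc]
          exact ⟨⟨he, le_rfl⟩, h2.symm⟩
        · have : A k = {0} := by
            ext t
            simp only [hA, hk, if_false, hek, Finset.mem_filter, Finset.mem_range, Finset.mem_singleton]
            constructor
            · rintro ⟨h4, _⟩; omega
            · rintro rfl; exact ⟨by omega, h2⟩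
          rw [this]; rfl
      · right; simp [hD, hk, hek])
    (by
      intro k hk hek
      refine ⟨0, ?_⟩
      simp only [hA, hk, if_false, Finset.mem_filter, Finset.mem_range]
      exact ⟨by omega, (hDm k _ hek).2.2.1.symm⟩)
    (by
      intro k k' hkk hk hk' p hp p' hp' hpp
      obtain ⟨a1, a2, a3, a4⟩ := hDm _ _ hp
      obtain ⟨b1, b2, b3, b4⟩ := hDm _ _ hp'
      have := S1.rep3 hmax k k' 0 0 hkk hk hk' (Nat.zero_le _) (Nat.zero_le _) (fun _ => rfl)
        (fun _ => rfl) _ _ _ (rp p p' hpp b2) (rr p p' a1 b2) a3 b3.symm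
      rw [length_slice] at this
      have e1 : p' + 1 - p + 1 + 0 + 0 = p' - p + 2 := by omega
      rwa [e1] at this)
    (by
      intro k k' hkk hk hk' p hp p' hp' y hy h1 h2
      obtain ⟨a1, a2, a3, a4⟩ := hDm _ _ hp
      obtain ⟨b1, b2, b3, b4⟩ := hDm _ _ hp'
      obtain ⟨c1, c2⟩ := hXs' y hy
      have hM := (rp p y h1 (by omega)).append (rp p' (e 0) b2 le_rfl).reverse (hXadj y hy).symm (by
        intro v hv hv'
        rw [List.mem_reverse] at hv'
        obtain ⟨i, i1, i2, i3⟩ := mem_slice.1 hv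
        obtain ⟨j, j1, j2, j3⟩ := mem_slice.1 hv'
        have := (S1.inj _ _ _ _ (by omega) (by omega) (i3.trans j3.symm)).2
        omega)
      have := S1.rep3 hmax k k' 0 0 hkk hk hk' (Nat.zero_le _) (Nat.zero_le _) (fun _ => rfl)
        (fun _ => rfl) _ _ _ hM (by
          intro v hv
          rw [List.mem_append, List.mem_reverse] at hv
          rcases hv with hv | hv
          · exact rr p y a1 (by omega) v hv
          · exact rr p' (e 0) b1 le_rfl v hv) a3 b3.symm
      rw [List.length_append, List.length_reverse, length_slice, length_slice] at this
      have e1 : y + 1 - p + (e 0 + 1 - p') + 1 + 0 + 0 = y - p + 1 + (e 0 - p') + 2 := by omega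
      rwa [e1] at this)
    (by
      intro k' h0 hk' h0X p' hp'
      obtain ⟨b1, b2, b3, b4⟩ := hDm _ _ hp'
      have := S1.rep3 hmax 0 k' 0 0 h0.symm (by omega) hk' (Nat.zero_le _) (Nat.zero_le _) (fun _ => rfl)
        (fun _ => rfl) _ _ _ (rp p' (e 0) b2 le_rfl).reverse (by
          intro v hv
          rw [List.mem_reverse] at hv
          exact rr p' (e 0) b1 le_rfl v hv) (hXadj 0 h0X).symm b3.symm
      rw [List.length_reverse, length_slice] at this
      have e1 : e 0 + 1 - p' + 1 + 0 + 0 = e 0 - p' + 2 := by omega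
      rwa [e1] at this)
    (by
      intro k k' hkk hk hk' h0 p hp t' ht'
      obtain ⟨a1, a2, a3, a4⟩ := hDm _ _ hp
      obtain ⟨b1, b2, b3⟩ := hAm _ _ ht'
      have := S1.rep3 hmax k k' 0 t' hkk hk hk' (Nat.zero_le _) b2 (fun _ => rfl)
        (fun h => absurd h h0) _ _ _ (rp p (e 0) a2 le_rfl) (rr p (e 0) a1 le_rfl) a3 b3
      rw [length_slice] at this
      have e1 : e 0 + 1 - p + 1 + 0 + t' = e 0 - p + t' + 2 := by omega
      rwa [e1] at this)
    (by
      intro k k' hkk hk hk' h0 h0' t ht t' ht'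
      obtain ⟨a1, a2, a3⟩ := hAm _ _ ht
      obtain ⟨b1, b2, b3⟩ := hAm _ _ ht'
      have := S1.rep3 hmax k k' t t' hkk hk hk' a2 b2 (fun h => absurd h h0)
        (fun h => absurd h h0') _ _ _ (PathL.single R z) (by
          intro v hv
          rw [List.mem_singleton] at hv
          exact ⟨e 0, he, le_rfl, hv.symm⟩) a3.symm b3
      have e1 : [z].length + 1 + t + t' = t + t' + 2 := by simp; omega
      rwa [e1] at this)
  -- degrees
  have hdg1 : dg R z ≤ Xs.card + ∑ k ∈ Finset.range h, (A k).card := by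
    have hsub : Finset.univ.filter (fun v => R.Adj z v) ⊆
        Xs.image (x 0) ∪ (Finset.range h).biUnion (fun k => (A k).image (x k)) := by
      intro v hv
      rw [Finset.mem_filter] at hv
      obtain ⟨k, hk, τ, hτ, hv'⟩ := S.closed hh v hv.2
      subst hv'
      rw [Finset.mem_union]
      by_cases hk0 : k = 0
      · left
        subst hk0
        apply Finset.mem_image_of_mem
        rw [hXs, Finset.mem_filter, Finset.mem_range]
        refine ⟨?_, hv.2⟩
        have : τ ≠ e 0 := by
          rintro rfl
          exact R.loopless.irrefl _ hv.2
        omega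
      · right
        rw [Finset.mem_biUnion]
        refine ⟨k, Finset.mem_range.2 hk, Finset.mem_image_of_mem _ ?_⟩
        simp only [hA, hk0, if_false, Finset.mem_filter, Finset.mem_range]
        exact ⟨by omega, hv.2⟩
    unfold dg
    refine (Finset.card_le_card hsub).trans ((Finset.card_union_le _ _).trans ?_)
    refine Nat.add_le_add Finset.card_image_le (Finset.card_biUnion_le.trans ?_)
    exact Finset.sum_le_sum (fun k _ => Finset.card_image_le)
  have hdg2 : Xs.card ≤ dg R z := by
    unfold dg
    apply Finset.card_le_card_of_injOn (x 0)
    · intro y hy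
      simp only [Finset.coe_filter, Finset.mem_univ, true_and, Set.mem_setOf_eq]
      exact hXadj y hy
    · intro i hi j hj hij
      have := (hXs' i hi).2
      have := (hXs' j hj).2
      exact (S1.inj _ _ _ _ (by omega) (by omega) hij).2
  have hcyc : Xs.card + 1 ≤ h := by
    have h1 := (hXs' y0 hy0m).2
    have h2 := hmax _ ((rp y0 (e 0) (by omega) le_rfl).gcyc (fun _ => hXadj y0 hy0m))
    rw [length_slice] at h2
    have h3 : Xs ⊆ Finset.Ico y0 (e 0) := fun y hy => Finset.mem_Ico.2 (hXs' y hy)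
    have h4 := Finset.card_le_card h3
    rw [Nat.card_Ico] at h4
    omega
  have hnb : ∀ k, e k = 0 → (D k).card = nb R (x k 0) (rs x e 0) := by
    intro k hek
    have hk : k ≠ 0 := by rintro rfl; omega
    have : Finset.univ.filter (fun v => R.Adj (x k 0) v ∧ v ∈ rs x e 0) = (D k).image (x 0) := by
      ext v
      simp only [Finset.mem_filter, Finset.mem_univ, true_and, Finset.mem_image, rs, Set.mem_setOf_eq]
      constructor
      · rintro ⟨h1, p, h2, h3, rfl⟩
        refine ⟨p, ?_, rfl⟩
        simp only [hD, hk, hek, if_true, if_false, Finset.mem_filter, Finset.mem_Icc]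
        exact ⟨⟨h2, h3⟩, h1⟩
      · rintro ⟨p, hp, rfl⟩
        obtain ⟨a1, a2, a3, a4⟩ := hDm _ _ hp
        exact ⟨a3, p, a1, a2, rfl⟩
    unfold nb
    rw [this, Finset.card_image_of_injOn]
    intro i hi j hj hij
    exact (S1.inj _ _ _ _ (hDm _ _ hi).2.1 (hDm _ _ hj).2.1 hij).2
  have hA0 : A 0 = ∅ := by simp [hA]
  by_cases hhigh : ∃ k, k ≠ 0 ∧ k < h ∧ ((A k).Nonempty ∨ ∃ p ∈ D k, y0 < p)
  · left
    have h1 := key.1 hhigh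
    have h2 : ∑ k ∈ Finset.range h, (A k).card + QQ R h x e (rs x e 0) ≤
        ∑ k ∈ Finset.range h, (if k = 0 then 0 else (A k).card + (D k).card) := by
      unfold QQ
      rw [← Finset.sum_add_distrib]
      apply Finset.sum_le_sum
      intro k _
      by_cases hk : k = 0
      · subst hk
        rw [hA0, if_neg (by omega)]; simp
      · rw [if_neg hk]
        split_ifs with hek
        · rw [hnb k hek]
        · omega
    omega
  · push Not at hhigh
    have hAe : ∀ k, k ≠ 0 → k < h → A k = ∅ := by
      intro k hk hk'
      exact (hhigh k hk hk').1
    have hAs : ∑ k ∈ Finset.range h, (A k).card = 0 := by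
      apply Finset.sum_eq_zero
      intro k hk
      by_cases hk0 : k = 0
      · subst hk0; rw [hA0]; rfl
      · rw [hAe k hk0 (Finset.mem_range.1 hk)]; rfl
    by_cases hDn : ∃ k, k ≠ 0 ∧ k < h ∧ (D k).Nonempty
    · have h1 := key.2 hAe hDn
      have h2 : QQ R h x e (rs x e 0) + mm R h x e (rs x e 0) ≤
          ∑ k ∈ Finset.range h, (if k = 0 ∨ D k = ∅ then 0 else (D k).card + 1) := by
        unfold QQ mm
        rw [Finset.card_filter, ← Finset.sum_add_distrib]
        apply Finset.sum_le_sum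
        intro k _
        by_cases hk : k = 0
        · subst hk
          have : e 0 ≠ 0 := by omega
          simp [this]
        · by_cases hek : e k = 0
          · rw [← hnb k hek]
            by_cases hDk : D k = ∅
            · simp [hDk]
            · have : 0 < (D k).card := Finset.card_pos.2 (Finset.nonempty_iff_ne_empty.2 hDk)
              simp [hk, hek, hDk, Finset.nonempty_iff_ne_empty]
          · simp [hek]
      by_cases hc : Xs.card ≤ mm R h x e (rs x e 0) + 1
      · left; omega
      · right
        refine ⟨?_, by omega, by omega⟩
        intro v hv
        obtain ⟨k, hk, τ, hτ, hv'⟩ := S.closed hh v hv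
        subst hv'
        have hk0 : k = 0 := by
          by_contra hk0
          have := hAe k hk0 hk
          have h3 : τ ∈ A k := by
            simp only [hA, hk0, if_false, Finset.mem_filter, Finset.mem_range]
            exact ⟨by omega, hv⟩
          rw [this] at h3; simp at h3
        subst hk0
        refine ⟨τ, ?_, rfl⟩
        have : τ ≠ e 0 := by
          rintro rfl
          exact R.loopless.irrefl _ hv
        omega
    · left
      push Not at hDn
      have : QQ R h x e (rs x e 0) = 0 := by
        unfold QQ
        apply Finset.sum_eq_zero
        intro k hk
        split_ifs with hek
        · rw [← hnb k hek, hDn k (by rintro rfl; omega) (Finset.mem_range.1 hk)]; rfl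
        · rfl
      omega

theorem pathL_exists {α : Type*} {R : SimpleGraph α} {l : List α} (hc : l.IsChain R.Adj) (hn : l.Nodup)
    (hne : l ≠ []) : PathL R l (l.head hne) (l.getLast hne) :=
  ⟨hc, hn, List.head?_eq_some_head hne, List.getLast?_eq_some_getLast hne⟩

theorem gcyc_rot {α : Type*} {R : SimpleGraph α} {l : List α} (hl : GCyc R l) {b : α} (hb : b ∈ l) :
    ∃ l' a, PathL R l' b a ∧ ∀ v, v ∈ l' ↔ v ∈ l := by
  obtain ⟨l1, l2, rfl⟩ := List.append_of_mem hb
  obtain ⟨hc, hn, hcl⟩ := hl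
  have hc' := List.isChain_append.1 hc
  have hn' := List.nodup_append.1 hn
  have hP2 := pathL_exists hc'.2.1 hn'.2.1 (by simp)
  simp only [List.head_cons] at hP2
  by_cases h1 : l1 = []
  · subst h1
    exact ⟨_, _, hP2, by simp⟩
  · have hP1 := pathL_exists hc'.1 hn'.1 h1
    refine ⟨_, _, hP2.append hP1 ?_ ?_, ?_⟩
    · by_cases h3 : 3 ≤ (l1 ++ b :: l2).length
      · apply hcl h3
        · rw [List.getLast?_append, hP2.last]; rfl
        · rw [List.head?_append, hP1.head]; rfl
      · simp only [List.length_append, List.length_cons] at h3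
        have h4 : 0 < l1.length := List.length_pos_of_ne_nil h1
        have h5 : l2 = [] := List.length_eq_zero_iff.1 (by omega)
        obtain ⟨a, rfl⟩ := List.length_eq_one_iff.1 (by omega : l1.length = 1)
        subst h5
        simp at hc ⊢
        exact hc.symm
    · intro v hv hv'
      exact hn'.2.2 v hv' v hv rfl
    · intro v
      simp only [List.mem_append]
      tauto

theorem prefix_path {α : Type*} {R : SimpleGraph α} (A : Finset α) (hA : A.Nonempty) :
    ∀ (n : ℕ) (l : List α) (b c : α), l.length = n → PathL R l b c → (∀ a ∈ A, a ∈ l) →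
    ∃ a ∈ A, ∃ l', PathL R l' b a ∧ A.card ≤ l'.length ∧ ∀ v ∈ l', v ∈ l := by
  classical
  intro n
  induction n with
  | zero =>
    intro l b c hl hP
    have := List.length_pos_of_mem hP.head_mem
    omega
  | succ n ih =>
    intro l b c hl hP hAl
    by_cases hc : c ∈ A
    · refine ⟨c, hc, l, hP, ?_, fun _ h => h⟩
      have h1 : A ⊆ l.toFinset := fun a ha => List.mem_toFinset.2 (hAl a ha)
      exact (Finset.card_le_card h1).trans (List.toFinset_card_le l)
    · have hne : l ≠ [] := by rintro rfl; simp at hl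
      have hcl : l.getLast hne = c := by
        have := hP.last
        rw [List.getLast?_eq_some_getLast hne] at this
        simpa using this
      have hdec : l.dropLast ++ [c] = l := by
        rw [← hcl]; exact List.dropLast_append_getLast hne
      have hAl' : ∀ a ∈ A, a ∈ l.dropLast := by
        intro a ha
        have := hAl a ha
        rw [← hdec, List.mem_append, List.mem_singleton] at this
        rcases this with h | h
        · exact h
        · exact absurd (h ▸ ha) hc
      obtain ⟨a0, ha0⟩ := hA
      have hne' : l.dropLast ≠ [] := List.ne_nil_of_mem (hAl' a0 ha0)
      have hP0 := pathL_exists (R := R) (l := l.dropLast)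
        (by have := hP.chain; rw [← hdec] at this; exact (List.isChain_append.1 this).1)
        (by have := hP.nodup; rw [← hdec] at this; exact (List.nodup_append.1 this).1) hne'
      have hb : l.dropLast.head hne' = b := by
        have := hP.head
        rw [← hdec, List.head?_append, hP0.head] at this
        simpa using this
      rw [hb] at hP0
      obtain ⟨a, ha, l', h1, h2, h3⟩ := ih l.dropLast b _ (by rw [List.length_dropLast]; omega) hP0 hAl'
      exact ⟨a, ha, l', h1, h2, fun v hv => List.mem_of_mem_dropLast (h3 v hv)⟩

theorem rowB {α : Type*} [Fintype α] {R : SimpleGraph α} {h : ℕ} {x : ℕ → ℕ → α} {e : ℕ → ℕ}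
    (S : MaxSys R h x e) (hh : 1 ≤ h) (hmax : ∀ l, GCyc R l → l.length ≤ h) (he : 1 ≤ e 0) :
    (∃ z ∈ rs x e 0, dg R z + QQ R h x e (rs x e 0) + 1 ≤ h) ∨
    ∃ Z : Finset α, (∀ z ∈ Z, z ∈ rs x e 0 ∧ dg R z + 1 ≤ h) ∧
      mm R h x e (rs x e 0) + 2 ≤ Z.card ∧
      ∀ b ∈ Z, ∀ A ⊆ Z, A.Nonempty → ∃ a ∈ A, ∃ l, PathL R l b a ∧ A.card ≤ l.length := by
  classical
  by_cases hgood : ∃ z ∈ rs x e 0, dg R z + QQ R h x e (rs x e 0) + 1 ≤ h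
  · exact Or.inl hgood
  right
  push Not at hgood
  have S1 := S.1
  rcases rowA S hh hmax he with h1 | ⟨hN, hm, hd⟩
  · exact absurd (hgood _ ⟨e 0, he, le_rfl, rfl⟩) (by omega)
  set z := x 0 (e 0) with hz
  set Xs : Finset ℕ := (Finset.range (e 0)).filter (fun y => R.Adj z (x 0 y)) with hXs
  have hXne : Xs.Nonempty := ⟨e 0 - 1, by
    rw [hXs, Finset.mem_filter, Finset.mem_range]
    refine ⟨by omega, ?_⟩
    have := S1.adj 0 (e 0 - 1) (by omega)
    rw [Nat.sub_add_cancel he] at this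
    exact this.symm⟩
  set y0 := Xs.min' hXne with hy0
  have hy0m : y0 ∈ Xs := Finset.min'_mem _ _
  have hXs' : ∀ y ∈ Xs, y0 ≤ y ∧ y < e 0 := by
    intro y hy
    refine ⟨Finset.min'_le _ _ hy, ?_⟩
    rw [hXs, Finset.mem_filter, Finset.mem_range] at hy; exact hy.1
  have hXadj : ∀ y ∈ Xs, R.Adj z (x 0 y) := fun y hy => (Finset.mem_filter.1 hy).2
  have hcard : (Xs.image (fun y => x 0 (y + 1))).card = Xs.card := by
    apply Finset.card_image_of_injOn
    intro i hi j hj hij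
    have := (hXs' i hi).2
    have := (hXs' j hj).2
    have := (S1.inj _ _ _ _ (by omega) (by omega) hij).2
    omega
  have hdX : dg R z ≤ Xs.card := by
    have : Finset.univ.filter (fun v => R.Adj z v) ⊆ Xs.image (x 0) := by
      intro v hv
      rw [Finset.mem_filter] at hv
      obtain ⟨p, hp, rfl⟩ := hN v hv.2
      apply Finset.mem_image_of_mem
      rw [hXs, Finset.mem_filter, Finset.mem_range]
      exact ⟨hp, hv.2⟩
    exact (Finset.card_le_card this).trans Finset.card_image_le
  have hcyc : GCyc R (slice (x 0) y0 (e 0)) := by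
    have h1 := (hXs' y0 hy0m).2
    refine PathL.gcyc (slice_path R _ _ _ (by omega) ?_ ?_) (fun _ => hXadj y0 hy0m)
    · intro i j _ h1 _ h2 h3
      exact (S1.inj _ _ _ _ (by omega) (by omega) h3).2
    · intro i _ hi
      exact S1.adj _ _ (by omega)
  have hZl : ∀ v ∈ Xs.image (fun y => x 0 (y + 1)), v ∈ slice (x 0) y0 (e 0) := by
    intro v hv
    obtain ⟨y, hy, rfl⟩ := Finset.mem_image.1 hv
    have := hXs' y hy
    rw [mem_slice]
    exact ⟨y + 1, by omega, by omega, rfl⟩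
  refine ⟨Xs.image (fun y => x 0 (y + 1)), ?_, by omega, ?_⟩
  · intro v hv
    obtain ⟨y, hy, rfl⟩ := Finset.mem_image.1 hv
    have hy' := (hXs' y hy).2
    have hvr : x 0 (y + 1) ∈ rs x e 0 := ⟨y + 1, by omega, by omega, rfl⟩
    refine ⟨hvr, ?_⟩
    have S2 := S1.update (fun τ => if τ ≤ y then x 0 τ else x 0 (e 0 + y + 1 - τ)) (e 0) (by simp) (by
      intro τ τ' h1 h2 h3
      split_ifs at h3 with h4 h5 h5
      · exact (S1.inj _ _ _ _ (by omega) (by omega) h3).2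
      · have := (S1.inj _ _ _ _ (by omega) (by omega) h3).2; omega
      · have := (S1.inj _ _ _ _ (by omega) (by omega) h3).2; omega
      · have := (S1.inj _ _ _ _ (by omega) (by omega) h3).2; omega) (by
      intro τ hτ
      split_ifs with h4 h5 h5
      · exact S1.adj _ _ (by omega)
      · have h6 : τ = y := by omega
        subst h6
        have h7 : e 0 + τ + 1 - (τ + 1) = e 0 := by omega
        rw [h7]
        exact (hXadj τ hy).symm
      · omega
      · have h7 : e 0 + y + 1 - τ = e 0 + y + 1 - (τ + 1) + 1 := by omega
        rw [h7]
        exact (S1.adj _ _ (by omega)).symm) (by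
      intro τ hτ k τ' hk hτ' heq
      split_ifs at heq with h4
      · have := (S1.inj _ _ _ _ (by omega) (by omega) heq).1
        rw [Nat.zero_mod] at this; omega
      · have := (S1.inj _ _ _ _ (by omega) (by omega) heq).1
        rw [Nat.zero_mod] at this; omega)
    have hee : (fun k => if k % h = 0 then e 0 else e k) = e := by
      funext k
      split_ifs with hk
      · rw [← hk, per_mod h e S1.eper]
      · rfl
    rw [hee] at S2
    set x' : ℕ → ℕ → α := fun k => if k % h = 0 then
      (fun τ => if τ ≤ y then x 0 τ else x 0 (e 0 + y + 1 - τ)) else x k with hx'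
    have S2' : MaxSys R h x' e := ⟨S2, S.2⟩
    have hr := rowA S2' hh hmax he
    have hx0 : ∀ k, x' k 0 = x k 0 := by
      intro k
      by_cases hk : k % h = 0
      · simp only [hx', hk, if_true, Nat.zero_le]
        conv_rhs => rw [← per_mod h x S1.per k, hk]
      · simp only [hx', hk, if_false]
    have hx00 : ∀ τ, x' 0 τ = if τ ≤ y then x 0 τ else x 0 (e 0 + y + 1 - τ) := by
      intro τ
      rw [hx']
      simp only
      rw [if_pos (Nat.zero_mod h)]
    have hxe : x' 0 (e 0) = x 0 (y + 1) := by
      rw [hx00, if_neg (by omega)]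
      congr 1; omega
    have hrs : rs x' e 0 = rs x e 0 := by
      ext v
      simp only [rs, hx00]
      constructor
      · rintro ⟨p, h1, h2, rfl⟩
        split_ifs with h3
        · exact ⟨p, h1, h2, rfl⟩
        · exact ⟨e 0 + y + 1 - p, by omega, by omega, rfl⟩
      · rintro ⟨p, h1, h2, rfl⟩
        by_cases h3 : p ≤ y
        · exact ⟨p, h1, h2, by rw [if_pos h3]⟩
        · refine ⟨e 0 + y + 1 - p, by omega, by omega, ?_⟩
          rw [if_neg (by omega)]; congr 1; omega
    have hQ : QQ R h x' e (rs x e 0) = QQ R h x e (rs x e 0) := by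
      unfold QQ; simp only [hx0]
    rw [hrs, hxe, hQ] at hr
    rcases hr with h1 | h1
    · exact absurd (hgood _ hvr) (by omega)
    · exact h1.2.2
  · intro b hb A hA hAne
    obtain ⟨l', a, hP, hl'⟩ := gcyc_rot hcyc (hZl b hb)
    obtain ⟨a, ha, l, h1, h2, _⟩ := prefix_path A hAne _ l' b a rfl hP
      (fun a ha => (hl' a).2 (hZl a (hA ha)))
    exact ⟨a, ha, l, h1, h2⟩

theorem rowJ {α : Type*} [Fintype α] {R : SimpleGraph α} {h : ℕ} {x : ℕ → ℕ → α} {e : ℕ → ℕ}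
    (S : MaxSys R h x e) (hh : 1 ≤ h) (hmax : ∀ l, GCyc R l → l.length ≤ h) (j : ℕ) (he : 1 ≤ e j) :
    (∃ z ∈ rs x e j, dg R z + QQ R h x e (rs x e j) + 1 ≤ h) ∨
    ∃ Z : Finset α, (∀ z ∈ Z, z ∈ rs x e j ∧ dg R z + 1 ≤ h) ∧
      mm R h x e (rs x e j) + 2 ≤ Z.card ∧
      ∀ b ∈ Z, ∀ A ⊆ Z, A.Nonempty → ∃ a ∈ A, ∃ l, PathL R l b a ∧ A.card ≤ l.length := by
  classical
  have h1 := rowB (S.shift j) hh hmax (by simpa using he)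
  have h2 : rs (fun k => x (k + j)) (fun k => e (k + j)) 0 = rs x e j := by
    unfold rs; simp only [zero_add]
  have h3 : QQ R h (fun k => x (k + j)) (fun k => e (k + j)) (rs x e j) = QQ R h x e (rs x e j) := by
    unfold QQ
    exact sum_shift h (fun k => if e k = 0 then nb R (x k 0) (rs x e j) else 0)
      (fun k => by simp only [S.1.eper, S.1.per]) j
  have h4 : mm R h (fun k => x (k + j)) (fun k => e (k + j)) (rs x e j) = mm R h x e (rs x e j) := by
    unfold mm
    rw [Finset.card_filter, Finset.card_filter]
    exact sum_shift h (fun k => if e k = 0 ∧ 0 < nb R (x k 0) (rs x e j) then 1 else 0)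
      (fun k => by simp only [S.1.eper, S.1.per]) j
  rw [h2, h3, h4] at h1
  exact h1

theorem MaxSys.closedJ {α : Type*} {R : SimpleGraph α} {h : ℕ} {x : ℕ → ℕ → α} {e : ℕ → ℕ}
    (S : MaxSys R h x e) (hh : 1 ≤ h) (j : ℕ) (v : α) (hv : R.Adj (x j (e j)) v) :
    ∃ k, k < h ∧ ∃ τ, τ ≤ e k ∧ x k τ = v := by
  obtain ⟨k, hk, τ, h1, h2⟩ := (S.shift j).closed hh v (by simpa using hv)
  refine ⟨(k + j) % h, Nat.mod_lt _ (by omega), τ, ?_, ?_⟩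
  · rw [per_mod h e S.1.eper]; exact h1
  · rw [per_mod h x S.1.per]; exact h2

theorem PathL.join {α : Type*} {R : SimpleGraph α} {l l' : List α} {a b c : α}
    (h : PathL R l a b) (h' : PathL R l' b c) (hd : ∀ x ∈ l, x ∈ l' → x = b) :
    ∃ q, PathL R q a c ∧ l'.length ≤ q.length ∧ (∀ v ∈ q, v ∈ l ∨ v ∈ l') := by
  cases l' with
  | nil => have := h'.head; simp at this
  | cons b' l'' =>
    have hb : b' = b := by have := h'.head; simpa using this
    subst hb
    have hl : 1 ≤ l.length := List.length_pos_of_mem h.head_mem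
    by_cases h0 : l'' = []
    · subst h0
      have : b' = c := by have := h'.last; simpa using this
      subst this
      exact ⟨l, h, by simpa using hl, fun v hv => Or.inl hv⟩
    · have hch := h'.chain
      have hnd := List.nodup_cons.1 h'.nodup
      have hP := pathL_exists (R := R) (l := l'') (by
        cases l'' with
        | nil => simp
        | cons y t => exact (List.isChain_cons_cons.1 hch).2) hnd.2 h0
      have hlast : l''.getLast h0 = c := by
        have := h'.last
        rw [List.getLast?_cons, hP.last] at this
        simpa using this
      rw [hlast] at hP
      refine ⟨l ++ l'', h.append hP ?_ ?_, by simp; omega, ?_⟩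
      · cases l'' with
        | nil => simp at h0
        | cons y t => exact (List.isChain_cons_cons.1 hch).1
      · intro v hv hv'
        have := hd v hv (List.mem_cons_of_mem _ hv')
        subst this
        exact hnd.1 hv'
      · intro v hv
        rw [List.mem_append] at hv
        rcases hv with hv | hv
        · exact Or.inl hv
        · exact Or.inr (List.mem_cons_of_mem _ hv)

theorem spread_abs {α : Type*} {R : SimpleGraph α} {h : ℕ} {x : ℕ → ℕ → α} {e : ℕ → ℕ}
    (S : Sys R h x e) (g : ℕ → ℕ) (f : ℕ → α) (hg : ∀ k, k < h → g k < h)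
    (ha : ∀ b u, b < h → u < h → g b = g u → ∃ l, PathL R l (f b) (x u 0) ∧
      ∀ v ∈ l, v = x u 0 ∨ v ∈ rs x e (g b))
    (hb : ∀ b, b < h → ∀ A ⊆ Finset.range h, A.Nonempty → (∀ a ∈ A, g a = g b) →
      ∃ a ∈ A, ∃ l, PathL R l (f b) (f a) ∧ A.card ≤ l.length) :
    ∀ b, b < h → ∀ A ⊆ Finset.range h, A.Nonempty →
      ∃ a ∈ A, ∃ l, PathL R l (f b) (f a) ∧ A.card ≤ l.length := by
  classical
  intro b hbh A hA hAne
  by_cases hall : ∀ a ∈ A, g a = g b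
  · exact hb b hbh A hA hAne hall
  push Not at hall
  obtain ⟨a0, ha0, hga0⟩ := hall
  set d : ℕ × ℕ → ℕ := fun p => if p.1 ≤ p.2 then p.2 - p.1 else p.2 + h - p.1 with hd
  have hne : ((A.filter (fun a => g a ≠ g b)) ×ˢ ((Finset.range h).filter (fun u => g u = g b))).Nonempty :=
    ⟨(a0, b), by simp [ha0, hga0, hbh]⟩
  obtain ⟨⟨a, u⟩, hau, hmin⟩ := Finset.exists_min_image _ d hne
  simp only [Finset.mem_product, Finset.mem_filter, Finset.mem_range] at hau
  obtain ⟨⟨haA, hga⟩, huh, hgu⟩ := hau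
  have hah : a < h := Finset.mem_range.1 (hA haA)
  have hneq : a ≠ u := by rintro rfl; exact hga hgu
  set t : ℕ := if u ≤ a then a - u else a + h - u with ht
  have ht1 : 1 ≤ t ∧ t < h := by rw [ht]; split_ifs <;> omega
  have hdau : d (a, u) + t = h := by
    simp only [hd, ht]; split_ifs <;> omega
  have hpos : ∀ w ∈ A, (if u ≤ w then w - u else w + h - u) ≤ t := by
    intro w hw
    have hwh : w < h := Finset.mem_range.1 (hA hw)
    by_contra hcon
    push Not at hcon
    by_cases hgw : g w = g b
    · have := hmin (a, w) (by simp [haA, hga, hwh, hgw])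
      simp only [hd, ht] at this hcon
      split_ifs at this hcon <;> omega
    · have := hmin (w, u) (by simp [hw, hgw, huh, hgu])
      simp only [hd, ht] at this hcon
      split_ifs at this hcon <;> omega
  have hcard : A.card ≤ t + 1 := by
    have : A.card ≤ (Finset.range (t + 1)).card := by
      apply Finset.card_le_card_of_injOn (fun w => if u ≤ w then w - u else w + h - u)
      · intro w hw
        simp only [Finset.coe_range, Set.mem_Iio]
        have := hpos w hw
        omega
      · intro w hw w' hw' heq
        have h1 : w < h := Finset.mem_range.1 (hA hw)
        have h2 : w' < h := Finset.mem_range.1 (hA hw')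
        simp only at heq
        split_ifs at heq <;> omega
    simpa using this
  obtain ⟨l1, hl1, hl1'⟩ := ha b u hbh huh hgu.symm
  obtain ⟨l2, hl2, hl2'⟩ := ha a a hah hah rfl
  have harc := S.cycSeq.arc u (u + t) (by omega) (by omega)
  have hend : x (u + t) 0 = x a 0 := by
    rw [ht]
    split_ifs with h1
    · congr 1; congr 1; omega
    · have : u + (a + h - u) = a + h := by omega
      rw [this, S.per]
  simp only [hend] at harc
  obtain ⟨q, hq, hq1, hq2⟩ := hl1.join harc (by
    intro v hv hv'
    rcases hl1' v hv with h1 | ⟨p, p1, p2, p3⟩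
    · exact h1
    · obtain ⟨i, i1, i2, i3⟩ := mem_slice.1 hv'
      have := (S.inj _ _ _ _ p2 (Nat.zero_le _) (p3.trans i3.symm)).2
      omega)
  obtain ⟨q', hq', _, _⟩ := hl2.join hq.reverse (by
    intro v hv hv'
    rw [List.mem_reverse] at hv'
    rcases hl2' v hv with h1 | ⟨p, p1, p2, p3⟩
    · exact h1
    · exfalso
      rcases hq2 v hv' with h1 | h1
      · rcases hl1' v h1 with h2 | ⟨r, r1, r2, r3⟩
        · have := (S.inj _ _ _ _ p2 (Nat.zero_le _) (p3.trans h2)).2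
          omega
        · have := (S.inj _ _ _ _ p2 r2 (p3.trans r3.symm)).1
          rw [Nat.mod_eq_of_lt (hg _ hah), Nat.mod_eq_of_lt (hg _ hbh)] at this
          exact hga this
      · obtain ⟨i, i1, i2, i3⟩ := mem_slice.1 h1
        have := (S.inj _ _ _ _ p2 (Nat.zero_le _) (p3.trans i3.symm)).2
        omega)
  refine ⟨a, haA, q'.reverse, hq'.reverse, ?_⟩
  rw [length_slice] at hq1
  rw [List.length_reverse] at *
  omega

theorem exists_injOn_fin {β : Type*} [Nonempty β] (s : Finset ℕ) (t : Finset β) (hst : s.card ≤ t.card) :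
    ∃ f : ℕ → β, (∀ k ∈ s, f k ∈ t) ∧ Set.InjOn f s := by
  obtain ⟨f, h1, h2⟩ := (Finset.finite_toSet s).exists_injOn_of_encard_le (t := (t : Set β)) (by
    rw [Set.encard_coe_eq_coe_finsetCard, Set.encard_coe_eq_coe_finsetCard]
    exact_mod_cast hst)
  exact ⟨f, fun k hk => h1 hk, h2⟩

theorem spread {α : Type*} [Fintype α] {R : SimpleGraph α} {h : ℕ} {u : ℕ → α}
    (hu : CycSeq R h u) (hh : 1 ≤ h) (hmax : ∀ l, GCyc R l → l.length ≤ h) :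
    ∃ f : ℕ → α, ∑ k ∈ Finset.range h, (dg R (f k) + 1) ≤ h * h ∧
      ∀ b, b < h → ∀ A ⊆ Finset.range h, A.Nonempty →
      ∃ a ∈ A, ∃ l, PathL R l (f b) (f a) ∧ A.card ≤ l.length := by
  classical
  obtain ⟨x, e, S, _⟩ := exists_max hu
  have S1 := S.1
  haveI : Nonempty α := ⟨u 0⟩
  set T1 : ℕ → Prop := fun j => 1 ≤ e j ∧ ∃ z ∈ rs x e j, dg R z + QQ R h x e (rs x e j) + 1 ≤ h with hT1
  set T2 : ℕ → Prop := fun j => 1 ≤ e j ∧ ¬ T1 j with hT2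
  have hz : ∀ j, ∃ z, T1 j → z ∈ rs x e j ∧ dg R z + QQ R h x e (rs x e j) + 1 ≤ h := by
    intro j
    by_cases hj : T1 j
    · obtain ⟨_, z, h1, h2⟩ := hj
      exact ⟨z, fun _ => ⟨h1, h2⟩⟩
    · exact ⟨u 0, fun h => absurd h hj⟩
  choose zz hzz using hz
  have hZ : ∀ j, ∃ Z : Finset α, T2 j → (∀ z ∈ Z, z ∈ rs x e j ∧ dg R z + 1 ≤ h) ∧
      mm R h x e (rs x e j) + 2 ≤ Z.card ∧
      ∀ b ∈ Z, ∀ A ⊆ Z, A.Nonempty → ∃ a ∈ A, ∃ l, PathL R l b a ∧ A.card ≤ l.length := by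
    intro j
    by_cases hj : T2 j
    · rcases rowJ S hh hmax j hj.1 with h1 | ⟨Z, h1⟩
      · exact absurd ⟨hj.1, h1⟩ hj.2
      · exact ⟨Z, fun _ => h1⟩
    · exact ⟨∅, fun h => absurd h hj⟩
  choose Z hZZ using hZ
  have hgE : ∀ k, ∃ j, (e k = 0 ∧ T2 j ∧ j < h ∧ 0 < nb R (x k 0) (rs x e j)) ∨
      (j = k ∧ ∀ i, ¬ (e k = 0 ∧ T2 i ∧ i < h ∧ 0 < nb R (x k 0) (rs x e i))) := by
    intro k
    by_cases hk : ∃ j, e k = 0 ∧ T2 j ∧ j < h ∧ 0 < nb R (x k 0) (rs x e j)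
    · obtain ⟨j, hj⟩ := hk
      exact ⟨j, Or.inl hj⟩
    · push Not at hk
      exact ⟨k, Or.inr ⟨rfl, by push Not; exact hk⟩⟩
  choose g hg using hgE
  have hgh : ∀ k, k < h → g k < h := by
    intro k hk
    rcases hg k with h1 | h1
    · exact h1.2.2.1
    · rw [h1.1]; exact hk
  have hg2 : ∀ k, ¬ T2 (g k) → g k = k := by
    intro k hk
    rcases hg k with h1 | h1
    · exact absurd h1.2.1 hk
    · exact h1.1
  have hι : ∀ j, ∃ ι : ℕ → α, T2 j → (∀ k ∈ (Finset.range h).filter (fun k => g k = j), ι k ∈ Z j) ∧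
      Set.InjOn ι ((Finset.range h).filter (fun k => g k = j) : Finset ℕ) := by
    intro j
    by_cases hj : T2 j
    · have h1 : ((Finset.range h).filter (fun k => g k = j)).card ≤ (Z j).card := by
        have h2 : (Finset.range h).filter (fun k => g k = j) ⊆
            insert j ((Finset.range h).filter (fun k => e k = 0 ∧ 0 < nb R (x k 0) (rs x e j))) := by
          intro k hk
          rw [Finset.mem_filter] at hk
          rw [Finset.mem_insert, Finset.mem_filter]
          rcases hg k with h3 | h3
          · right; rw [hk.2] at h3; exact ⟨hk.1, h3.1, h3.2.2.2⟩
          · left; rw [← hk.2]; exact h3.1.symm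
        have h3 := (Finset.card_le_card h2).trans (Finset.card_insert_le _ _)
        have h4 := (hZZ j hj).2.1
        unfold mm at h4
        omega
      obtain ⟨f, hf⟩ := exists_injOn_fin _ _ h1
      exact ⟨f, fun _ => hf⟩
    · exact ⟨u, fun h => absurd h hj⟩
  choose ι hιι using hι
  set f : ℕ → α := fun k => if T2 (g k) then ι (g k) k else if T1 k then zz k else x k 0 with hf
  have f1 : ∀ k, T2 (g k) → f k = ι (g k) k := by intro k h1; simp only [hf, if_pos h1]
  have f2 : ∀ k, ¬ T2 (g k) → T1 k → f k = zz k := by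
    intro k h1 h2; simp only [hf, if_neg h1, if_pos h2]
  have f3 : ∀ k, ¬ T2 (g k) → ¬ T1 k → f k = x k 0 := by
    intro k h1 h2; simp only [hf, if_neg h1, if_neg h2]
  have f1Z : ∀ k, k < h → T2 (g k) → f k ∈ Z (g k) := by
    intro k hk h1
    rw [f1 k h1]
    exact (hιι _ h1).1 k (by simp [hk])
  -- trivial rows
  have triv : ∀ k, ¬ T2 (g k) → ¬ T1 k → e k = 0 := by
    intro k h1 h2
    rw [hg2 k h1] at h1
    by_contra h3
    exact h1 ⟨by omega, h2⟩
  -- path to the cycle inside a row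
  have conn : ∀ j a c q, a ∈ rs x e j → 1 ≤ q → q ≤ e j → R.Adj c (x j q) → c ∉ rs x e j →
      ∃ l, PathL R l a c ∧ ∀ v ∈ l, v = c ∨ v ∈ rs x e j := by
    rintro j a c q ⟨p, p1, p2, rfl⟩ q1 q2 hc hcn
    have rp : ∀ p p', p ≤ p' → p' ≤ e j → PathL R (slice (x j) p p') (x j p) (x j p') := by
      intro p p' hp hp'
      apply slice_path R _ _ _ hp
      · intro i k _ h1 _ h2 h3
        exact (S1.inj _ _ _ _ (by omega) (by omega) h3).2
      · intro i _ hi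
        exact S1.adj _ _ (by omega)
    have rr : ∀ p p', 1 ≤ p → p' ≤ e j → ∀ v ∈ slice (x j) p p', v ∈ rs x e j := by
      intro p p' h1 h2 v hv
      obtain ⟨i, h3, h4, h5⟩ := mem_slice.1 hv
      exact ⟨i, by omega, by omega, h5⟩
    have : ∃ l, PathL R l (x j p) (x j q) ∧ ∀ v ∈ l, v ∈ rs x e j := by
      rcases le_total p q with hl | hl
      · exact ⟨_, rp p q hl q2, rr p q p1 q2⟩
      · exact ⟨_, (rp q p hl p2).reverse, fun v hv => rr q p q1 p2 v (List.mem_reverse.1 hv)⟩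
    obtain ⟨l, hl, hlr⟩ := this
    refine ⟨l ++ [c], hl.append (PathL.single R c) hc.symm ?_, ?_⟩
    · intro v hv hv'
      rw [List.mem_singleton] at hv'
      subst hv'
      exact hcn (hlr _ hv)
    · intro v hv
      rw [List.mem_append, List.mem_singleton] at hv
      rcases hv with hv | hv
      · exact Or.inr (hlr v hv)
      · exact Or.inl hv
  have hx0 : ∀ k j, x k 0 ∉ rs x e j := by
    rintro k j ⟨p, p1, p2, p3⟩
    have := (S1.inj _ _ _ _ p2 (Nat.zero_le _) p3).2
    omega
  refine ⟨f, ?_, spread_abs S1 g f hgh ?_ ?_⟩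
  · -- degree sum
    have hk1 : ∀ k ∈ Finset.range h, dg R (f k) + 1 + (if T1 k then QQ R h x e (rs x e k) else 0) ≤
        h + ∑ j ∈ Finset.range h, (if T1 j then (if e k = 0 then nb R (x k 0) (rs x e j) else 0) else 0) := by
      intro k hk
      rw [Finset.mem_range] at hk
      by_cases h1 : T2 (g k)
      · have h2 := ((hZZ _ h1).1 _ (f1Z k hk h1)).2
        have h3 : ¬ T1 k := by
          intro h3
          rcases hg k with h4 | h4
          · have := h3.1; omega
          · rw [h4.1] at h1; exact h1.2 h3
        rw [if_neg h3]
        omega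
      · by_cases h2 : T1 k
        · have := (hzz k h2).2
          rw [f2 k h1 h2, if_pos h2]
          omega
        · have hek := triv k h1 h2
          rw [f3 k h1 h2, if_neg h2]
          have h9 : ∑ j ∈ Finset.range h,
              (if T1 j then (if e k = 0 then nb R (x k 0) (rs x e j) else 0) else 0) =
              ∑ j ∈ Finset.range h, (if T1 j then nb R (x k 0) (rs x e j) else 0) := by
            apply Finset.sum_congr rfl
            intro j _
            rw [if_pos hek]
          rw [h9]
          have hsub : Finset.univ.filter (fun v => R.Adj (x k 0) v) ⊆
              (((Finset.range h).erase k).image (fun i => x i 0)) ∪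
              (Finset.range h).biUnion (fun j => if T1 j then
                Finset.univ.filter (fun v => R.Adj (x k 0) v ∧ v ∈ rs x e j) else ∅) := by
            intro v hv
            rw [Finset.mem_filter] at hv
            obtain ⟨j, hj, τ, hτ, hv'⟩ := S.closedJ hh k v (by rw [hek]; exact hv.2)
            subst hv'
            rw [Finset.mem_union]
            by_cases hτ0 : τ = 0
            · left
              subst hτ0
              rw [Finset.mem_image]
              refine ⟨j, ?_, rfl⟩
              rw [Finset.mem_erase, Finset.mem_range]
              refine ⟨?_, hj⟩
              rintro rfl
              exact R.loopless.irrefl _ hv.2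
            · right
              rw [Finset.mem_biUnion]
              refine ⟨j, Finset.mem_range.2 hj, ?_⟩
              have hvr : x j τ ∈ rs x e j := ⟨τ, by omega, hτ, rfl⟩
              have hT : T1 j := by
                by_contra hT
                have hT2j : T2 j := ⟨by omega, hT⟩
                have hnb : 0 < nb R (x k 0) (rs x e j) := by
                  unfold nb
                  apply Finset.card_pos.2
                  exact ⟨x j τ, by simp [hv.2, hvr]⟩
                rcases hg k with h4 | h4
                · exact h1 h4.2.1
                · exact h4.2 j ⟨hek, hT2j, hj, hnb⟩
              rw [if_pos hT]
              simp [hv.2, hvr]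
          have h5 := (Finset.card_le_card hsub).trans (Finset.card_union_le _ _)
          have h6 : (((Finset.range h).erase k).image (fun i => x i 0)).card + 1 ≤ h := by
            have := Finset.card_image_le (s := (Finset.range h).erase k) (f := fun i => x i 0)
            rw [Finset.card_erase_of_mem (Finset.mem_range.2 hk), Finset.card_range] at this
            omega
          have h7 := Finset.card_biUnion_le (s := Finset.range h) (t := fun j => if T1 j then
                Finset.univ.filter (fun v => R.Adj (x k 0) v ∧ v ∈ rs x e j) else ∅)
          have h8 := h7.trans (Finset.sum_le_sum
            (g := fun j => if T1 j then nb R (x k 0) (rs x e j) else 0) (fun j _ => by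
              by_cases hT : T1 j
              · simp only [if_pos hT]; unfold nb; exact le_of_eq (by congr)
              · simp only [if_neg hT]; simp))
          have h10 := h5.trans (Nat.add_le_add_left h8 _)
          have h11 : dg R (x k 0) = (Finset.univ.filter (fun v => R.Adj (x k 0) v)).card := by
            unfold dg; congr
          omega
    have hk2 := Finset.sum_le_sum hk1
    rw [Finset.sum_add_distrib, Finset.sum_add_distrib (f := fun _ => h), Finset.sum_comm] at hk2
    have hk3 : ∑ j ∈ Finset.range h, ∑ k ∈ Finset.range h,
        (if T1 j then (if e k = 0 then nb R (x k 0) (rs x e j) else 0) else 0) =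
        ∑ j ∈ Finset.range h, (if T1 j then QQ R h x e (rs x e j) else 0) := by
      apply Finset.sum_congr rfl
      intro j _
      split_ifs
      · rfl
      · simp
    rw [hk3] at hk2
    simp only [Finset.sum_const, Finset.card_range, smul_eq_mul] at hk2
    omega
  · -- access to the cycle
    intro b w hb hw hbw
    by_cases h1 : T2 (g b)
    · have hfb := ((hZZ _ h1).1 _ (f1Z b hb h1)).1
      rcases hg w with h2 | h2
      · rw [← hbw] at h2
        have h3 := h2.2.2.2
        unfold nb at h3
        obtain ⟨v, hv⟩ := Finset.card_pos.1 h3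
        rw [Finset.mem_filter] at hv
        obtain ⟨_, hv1, q, q1, q2, rfl⟩ := hv
        exact conn _ _ _ q hfb q1 q2 hv1 (hx0 _ _)
      · have h3 : w = g b := by rw [hbw]; exact h2.1.symm
        rw [h3]
        exact conn _ _ _ 1 hfb le_rfl h1.1 (S1.adj _ 0 h1.1) (hx0 _ _)
    · have h2 := hg2 b h1
      have h3 : w = b := by
        have : ¬ T2 (g w) := by rw [← hbw]; exact h1
        rw [← hg2 w this, ← hbw, h2]
      subst h3
      by_cases h4 : T1 w
      · have h5 := (hzz w h4).1
        rw [f2 w h1 h4, h2]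
        exact conn _ _ _ 1 h5 le_rfl h4.1 (S1.adj _ 0 h4.1) (hx0 _ _)
      · rw [f3 w h1 h4]
        exact ⟨_, PathL.single R _, fun v hv => Or.inl (List.mem_singleton.1 hv)⟩
  · -- inside a group
    intro b hb A hA hAne hAg
    by_cases h1 : T2 (g b)
    · have hAf : ∀ a ∈ A, f a = ι (g b) a := by
        intro a ha
        rw [f1 a (by rw [hAg a ha]; exact h1), hAg a ha]
      have hAm : ∀ a ∈ A, a ∈ (Finset.range h).filter (fun k => g k = g b) := by
        intro a ha
        rw [Finset.mem_filter]; exact ⟨hA ha, hAg a ha⟩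
      have hinj : (A.image f).card = A.card := by
        apply Finset.card_image_of_injOn
        intro a ha a' ha' heq
        rw [hAf a ha, hAf a' ha'] at heq
        exact (hιι _ h1).2 (hAm a ha) (hAm a' ha') heq
      obtain ⟨v, hv, l, hl, hl2⟩ := (hZZ _ h1).2.2 (f b) (f1Z b hb h1) (A.image f) (by
        intro v hv
        obtain ⟨a, ha, rfl⟩ := Finset.mem_image.1 hv
        rw [hAf a ha]
        exact (hιι _ h1).1 a (hAm a ha)) (hAne.image f)
      obtain ⟨a, ha, rfl⟩ := Finset.mem_image.1 hv
      exact ⟨a, ha, l, hl, by omega⟩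
    · have hsing : ∀ a ∈ A, a = b := by
        intro a ha
        have : ¬ T2 (g a) := by rw [hAg a ha]; exact h1
        rw [← hg2 a this, hAg a ha, hg2 b h1]
      obtain ⟨a, ha⟩ := hAne
      refine ⟨a, ha, [f b], ?_, ?_⟩
      · rw [hsing a ha]; exact PathL.single R _
      · have : A ⊆ {b} := fun c hc => Finset.mem_singleton.2 (hsing c hc)
        simpa using Finset.card_le_card this

/-! ### Walks versus lists -/

theorem walk_cycSeq {α : Type*} {G : SimpleGraph α} {v : α} {w : G.Walk v v} (hw : w.IsCycle) :
    CycSeq G w.length (fun k => w.getVert (k % w.length)) := by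
  have h3 := hw.three_le_length
  refine ⟨fun k => by simp only [Nat.add_mod_right], ?_, ?_⟩
  · intro k k' hk
    have h1 := Nat.mod_lt k (by omega : 0 < w.length)
    have h2 := Nat.mod_lt k' (by omega : 0 < w.length)
    have h3 : k % w.length ∈ {i | i ≤ w.length - 1} := by
      rw [Set.mem_ofPred_eq]; omega
    have h4 : k' % w.length ∈ {i | i ≤ w.length - 1} := by
      rw [Set.mem_ofPred_eq]; omega
    exact hw.getVert_injOn' h3 h4 hk
  · intro _ k
    have h1 := Nat.mod_lt k (by omega : 0 < w.length)
    have h2 := w.adj_getVert_succ h1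
    have h4 : w.getVert ((k + 1) % w.length) = w.getVert (k % w.length + 1) := by
      by_cases h5 : k % w.length + 1 = w.length
      · have h6 : (k + 1) % w.length = 0 := by
          rw [Nat.add_mod, Nat.mod_eq_of_lt (by omega : 1 < w.length), h5, Nat.mod_self]
        rw [h6, h5]; simp
      · have h6 : (k + 1) % w.length = k % w.length + 1 := by
          rw [Nat.add_mod, Nat.mod_eq_of_lt (by omega : 1 < w.length), Nat.mod_eq_of_lt (by omega)]
        rw [h6]
    simp only [h4]
    exact h2

theorem gcyc_walk {α : Type*} {G : SimpleGraph α} {l : List α} (hl : GCyc G l) (h3 : 3 ≤ l.length) :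
    ∃ (v : α) (w : G.Walk v v), w.IsCycle ∧ w.length = l.length := by
  have hne : l ≠ [] := by rintro rfl; simp at h3
  have hadj : G.Adj (l.getLast hne) (l.head hne) :=
    hl.closed h3 _ (List.getLast?_eq_some_getLast hne) _ (List.head?_eq_some_head hne)
  refine ⟨_, Walk.cons hadj (Walk.ofSupport l hne hl.chain), ?_, ?_⟩
  · rw [Walk.isCycle_iff_isPath_tail_and_le_length]
    refine ⟨?_, ?_⟩
    · have hp : (Walk.ofSupport l hne hl.chain).IsPath := by
        rw [Walk.isPath_def, Walk.support_ofSupport]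
        exact hl.nodup
      simp only [Walk.getVert_cons_succ, Walk.tail_cons, Walk.isPath_copy]
      exact hp
    · rw [Walk.length_cons, Walk.length_ofSupport]; omega
  · rw [Walk.length_cons, Walk.length_ofSupport]; omega

theorem dirac {α : Type*} [Fintype α] (G : SimpleGraph α) (v0 : α) :
    ∃ z l, GCyc G l ∧ dg G z + 1 ≤ l.length := by
  classical
  let P : Set ℕ := {n | ∃ l a b, PathL G l a b ∧ l.length = n}
  have hne : P.Nonempty := ⟨1, [v0], v0, v0, PathL.single G v0, rfl⟩
  have hbd : BddAbove P := ⟨Fintype.card α, by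
    rintro n ⟨l, a, b, hl, rfl⟩; exact hl.nodup.length_le_card⟩
  obtain ⟨l, a, b, hl, hlen⟩ := Nat.sSup_mem hne hbd
  have hmem : ∀ v, G.Adj a v → v ∈ l := by
    intro v hv
    by_contra hcon
    have h1 := (PathL.single G v).append hl hv.symm (by
      intro y hy hy'
      rw [List.mem_singleton] at hy; subst hy; exact hcon hy')
    have h2 := le_csSup hbd ⟨_, _, _, h1, rfl⟩
    rw [← hlen] at h2
    simp at h2
  obtain ⟨c, hc, l', h1, h2, _⟩ := prefix_path (insert a (Finset.univ.filter (fun v => G.Adj a v)))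
    (Finset.insert_nonempty _ _) _ l a b rfl hl (by
      intro v hv
      rw [Finset.mem_insert, Finset.mem_filter] at hv
      rcases hv with rfl | hv
      · exact hl.head_mem
      · exact hmem v hv.2)
  rw [Finset.card_insert_of_notMem (by simp)] at h2
  have h5 : dg G a = (Finset.univ.filter (fun v => G.Adj a v)).card := by unfold dg; congr
  refine ⟨a, l', h1.gcyc ?_, by omega⟩
  intro h3
  rw [Finset.mem_insert, Finset.mem_filter] at hc
  rcases hc with rfl | hc
  · exfalso
    have hh := h1.head
    have hL := h1.last
    have hn := h1.nodup
    match l', h3, hh, hL, hn with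
    | p :: q :: t, _, hh, hL, hn =>
      have e1 : p = c := by simpa using hh
      subst e1
      rw [List.getLast?_cons_cons] at hL
      exact (List.nodup_cons.1 hn).1 (List.mem_of_getLast? hL)
  · exact hc.2.symm

theorem extCycle_cycSeq {α : Type*} {R : SimpleGraph α} {W : Set α} {h : ℕ} (H : ExtCycle R W h) :
    1 ≤ h ∧ ∃ u, CycSeq R h u := by
  rcases H with ⟨rfl, v, _⟩ | ⟨rfl, a, b, hab, _⟩ | ⟨h3, v, w, hw, rfl, _⟩
  · exact ⟨le_rfl, fun _ => v, fun _ => rfl, fun _ _ _ => by omega, fun h => by omega⟩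
  · refine ⟨by omega, fun k => if k % 2 = 0 then a else b, ?_, ?_, ?_⟩
    · intro k; simp only [Nat.add_mod_right]
    · intro k k' hk
      have h1 := hab.ne
      split_ifs at hk with h2 h3 h3
      · omega
      · exact absurd hk h1
      · exact absurd hk.symm h1
      · omega
    · intro _ k
      rcases Nat.mod_two_eq_zero_or_one k with h1 | h1
      · rw [if_pos h1, if_neg (by omega)]; exact hab
      · rw [if_neg (by omega), if_pos (by omega)]; exact hab.symm
  · exact ⟨by omega, _, walk_cycSeq hw⟩

theorem gcyc_extCycle {α : Type*} {R : SimpleGraph α} {l : List α} (hl : GCyc R l) (h1 : 1 ≤ l.length) :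
    ∃ W, ExtCycle R W l.length := by
  by_cases h3 : 3 ≤ l.length
  · obtain ⟨v, w, hw, hlen⟩ := gcyc_walk hl h3
    exact ⟨_, Or.inr (Or.inr ⟨h3, v, w, hw, hlen, rfl⟩)⟩
  · by_cases h2 : l.length = 1
    · obtain ⟨a, rfl⟩ := List.length_eq_one_iff.1 h2
      exact ⟨{a}, Or.inl ⟨h2, a, rfl⟩⟩
    · have h4 : l.length = 2 := by omega
      obtain ⟨a, b, rfl⟩ := List.length_eq_two.1 h4
      have := hl.chain
      simp at this
      exact ⟨{a, b}, Or.inr (Or.inl ⟨h4, a, b, this, rfl⟩)⟩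

theorem CycSeq.le_card {α : Type*} [Fintype α] {R : SimpleGraph α} {h : ℕ} {u : ℕ → α}
    (hu : CycSeq R h u) : h ≤ Fintype.card α := by
  have : (Finset.range h).card ≤ (Finset.univ : Finset α).card := by
    apply Finset.card_le_card_of_injOn u (fun _ _ => Finset.mem_univ _)
    intro i hi j hj hij
    have := hu.inj i j hij
    simp only [Finset.coe_range, Set.mem_Iio] at hi hj
    rwa [Nat.mod_eq_of_lt hi, Nat.mod_eq_of_lt hj] at this
  simpa using this

theorem CycSeq.shift {α : Type*} {R : SimpleGraph α} {h : ℕ} {u : ℕ → α} (hu : CycSeq R h u) (j : ℕ) :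
    CycSeq R h (fun k => u (k + j)) := by
  refine ⟨fun k => ?_, fun k k' hk => ?_, fun h2 k => ?_⟩
  · have : k + h + j = k + j + h := by omega
    simp only [this, hu.per]
  · exact Nat.ModEq.add_right_cancel' j (hu.inj _ _ hk)
  · have : k + 1 + j = k + j + 1 := by omega
    simp only [this]
    exact hu.cyc h2 _

/-! ### The final count -/

open Classical in
/-- number of selected vertices adjacent to the vertex at position `p` of the cycle -/
noncomputable def cnt {α : Type*} (G : SimpleGraph α) (h : ℕ) (f : ℕ → α) (c : ℕ → α) (p : ℕ) : ℕ :=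
  ((Finset.range h).filter (fun k => G.Adj (f k) (c p))).card

theorem cnt_CD {α : Type*} {G : SimpleGraph α} {s : Set α} {n h : ℕ} {c : ℕ → α}
    (hc : CycSeq G n c) (hmax : ∀ l, GCyc G l → l.length ≤ n) (hcs : ∀ p, c p ∉ s) (f : ℕ → s)
    (hf : ∀ b, b < h → ∀ A ⊆ Finset.range h, A.Nonempty →
      ∃ a ∈ A, ∃ l, PathL (G.induce s) l (f b) (f a) ∧ A.card ≤ l.length)
    (p q : ℕ) (hpq : p ≠ q) (hp : p < n) (hq : q < n)
    (hp0 : 0 < cnt G h (fun k => (f k : α)) c p) (hq0 : 0 < cnt G h (fun k => (f k : α)) c q) :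
    CD n p q (cnt G h (fun k => (f k : α)) c q + 1) := by
  classical
  unfold cnt at hp0 hq0
  obtain ⟨b, hb⟩ := Finset.card_pos.1 hp0
  rw [Finset.mem_filter, Finset.mem_range] at hb
  obtain ⟨a, ha, l, hl, hlen⟩ := hf b hb.1 _ (Finset.filter_subset _ _) (Finset.card_pos.1 hq0)
  rw [Finset.mem_filter] at ha
  have hl' : PathL G (l.map Subtype.val) (f b : α) (f a : α) :=
    hl.map Subtype.val Subtype.val_injective (fun x y hxy => hxy)
  have hms : ∀ v ∈ l.map Subtype.val, v ∈ s := by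
    intro v hv
    obtain ⟨y, _, rfl⟩ := List.mem_map.1 hv
    exact y.2
  have hcc : c p ≠ c q := by
    intro h1
    have := hc.inj _ _ h1
    rw [Nat.mod_eq_of_lt hp, Nat.mod_eq_of_lt hq] at this
    exact hpq this
  have hQ := ((PathL.single G (c p)).append hl' hb.2.symm (by
    intro v hv hv'
    rw [List.mem_singleton] at hv
    subst hv
    exact hcs p (hms _ hv'))).append (PathL.single G (c q)) ha.2 (by
    intro v hv hv'
    rw [List.mem_singleton] at hv'
    subst hv'
    rw [List.mem_append, List.mem_singleton] at hv
    rcases hv with hv | hv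
    · exact hcc hv.symm
    · exact hcs q (hms _ hv))
  have hl1 : 1 ≤ l.length := List.length_pos_of_mem hl.head_mem
  have hlenQ : ([c p] ++ l.map Subtype.val ++ [c q]).length = l.length + 2 := by simp
  have hD := hc.repD hmax p q hpq hp hq _ hQ (by omega) (by
    intro k hk
    rw [List.mem_append, List.mem_append, List.mem_singleton, List.mem_singleton] at hk
    rcases hk with (hk | hk) | hk
    · exact Or.inl hk
    · exact absurd (hms _ hk) (hcs k)
    · exact Or.inr hk)
  rw [hlenQ] at hD
  have hcq : cnt G h (fun k => (f k : α)) c q ≤ l.length := by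
    unfold cnt
    refine le_trans (le_of_eq ?_) hlen
    congr
  unfold CD at *
  omega

theorem cnt_sum {α : Type*} [Fintype α] {G : SimpleGraph α} {s : Set α} [Fintype s] {n h δ : ℕ} {c : ℕ → α}
    (hcov : ∀ v, v ∉ s → ∃ p, p < n ∧ c p = v) (hδ : ∀ v, δ ≤ dg G v) (f : ℕ → s)
    (hf : ∑ k ∈ Finset.range h, (dg (G.induce s) (f k) + 1) ≤ h * h) :
    h * (δ + 1) ≤ ∑ p ∈ Finset.range n, cnt G h (fun k => (f k : α)) c p + h * h := by
  classical
  have h1 : ∀ k ∈ Finset.range h, δ + 1 ≤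
      ∑ p ∈ Finset.range n, (if G.Adj (f k) (c p) then 1 else 0) + (dg (G.induce s) (f k) + 1) := by
    intro k _
    have hsub : Finset.univ.filter (fun v => G.Adj (f k) v) ⊆
        ((Finset.range n).filter (fun p => G.Adj (f k) (c p))).image c ∪
        (Finset.univ.filter (fun y => (G.induce s).Adj (f k) y)).image Subtype.val := by
      intro v hv
      rw [Finset.mem_filter] at hv
      rw [Finset.mem_union]
      by_cases hvs : v ∈ s
      · right
        rw [Finset.mem_image]
        refine ⟨⟨v, hvs⟩, ?_, rfl⟩
        rw [Finset.mem_filter]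
        exact ⟨Finset.mem_univ _, hv.2⟩
      · left
        obtain ⟨p, hp, rfl⟩ := hcov v hvs
        apply Finset.mem_image_of_mem
        rw [Finset.mem_filter, Finset.mem_range]
        exact ⟨hp, hv.2⟩
    have h2 := (Finset.card_le_card hsub).trans (Finset.card_union_le _ _)
    have h3 := Finset.card_image_le (s := (Finset.range n).filter (fun p => G.Adj (f k) (c p))) (f := c)
    have h4 := Finset.card_image_le (s := Finset.univ.filter (fun y => (G.induce s).Adj (f k) y))
      (f := Subtype.val)
    have h5 : dg G (f k) = (Finset.univ.filter (fun v => G.Adj (f k) v)).card := by unfold dg; congr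
    have h6 : dg (G.induce s) (f k) = (Finset.univ.filter (fun y => (G.induce s).Adj (f k) y)).card := by
      unfold dg; congr
    have h7 := hδ (f k)
    rw [← Finset.card_filter]
    omega
  have h2 := Finset.sum_le_sum h1
  rw [Finset.sum_add_distrib (f := fun k => ∑ p ∈ Finset.range n, if G.Adj (f k) (c p) then 1 else 0),
    Finset.sum_comm] at h2
  simp only [Finset.sum_const, Finset.card_range, smul_eq_mul] at h2
  have h3 : ∑ p ∈ Finset.range n, ∑ k ∈ Finset.range h, (if G.Adj (f k) (c p) then 1 else 0) =
      ∑ p ∈ Finset.range n, cnt G h (fun k => (f k : α)) c p := by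
    apply Finset.sum_congr rfl
    intro p _
    unfold cnt
    rw [← Finset.card_filter]
  rw [h3] at h2
  omega

theorem final_count {α : Type*} [Fintype α] {G : SimpleGraph α} {s : Set α} [Fintype s] {n h δ : ℕ}
    {c : ℕ → α} (hh : 1 ≤ h) (hδh : h + 1 ≤ δ) (hn : 1 ≤ n)
    (hc : CycSeq G n c) (hmax : ∀ l, GCyc G l → l.length ≤ n) (hcs : ∀ p, c p ∉ s)
    (hcov : ∀ v, v ∉ s → ∃ p, c p = v) (hδ : ∀ v, δ ≤ dg G v) (f : ℕ → s)
    (hf : ∀ b, b < h → ∀ A ⊆ Finset.range h, A.Nonempty →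
      ∃ a ∈ A, ∃ l, PathL (G.induce s) l (f b) (f a) ∧ A.card ≤ l.length)
    (hfs : ∑ k ∈ Finset.range h, (dg (G.induce s) (f k) + 1) ≤ h * h) :
    (h + 1) * (δ - h + 1) ≤ n := by
  classical
  have key : ∀ c : ℕ → α, CycSeq G n c → (∀ p, c p ∉ s) → (∀ v, v ∉ s → ∃ p, c p = v) →
      0 < cnt G h (fun k => (f k : α)) c 0 → (h + 1) * (δ - h + 1) ≤ n := by
    intro c hc hcs hcov h0
    have hs := cnt_sum (n := n) (h := h) (c := c) (fun v hv => by
      obtain ⟨p, hp⟩ := hcov v hv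
      exact ⟨p % n, Nat.mod_lt _ (by omega), by rw [per_mod n c hc.per, hp]⟩) hδ f hfs
    have hCD := cnt_CD hc hmax hcs f hf
    set a : ℕ → ℕ := cnt G h (fun k => (f k : α)) c with ha
    have hah : ∀ p, a p ≤ h := by
      intro p
      rw [ha]; unfold cnt
      exact (Finset.card_filter_le _ _).trans (by simp)
    obtain ⟨d, rfl⟩ : ∃ d, δ = h + d := ⟨δ - h, by omega⟩
    have hsum : h * (d + 1) ≤ ∑ p ∈ Finset.range n, a p := by nlinarith
    set st : ℕ := ((Finset.range n).filter (fun p => 0 < a p)).card with hst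
    have hst2 : ∑ p ∈ Finset.range n, a p ≤ st * h := by
      rw [hst, Finset.card_filter, Finset.sum_mul]
      apply Finset.sum_le_sum
      intro p _
      split_ifs with h1
      · have := hah p; omega
      · omega
    have hst3 : d + 1 ≤ st := by
      have : h * (d + 1) ≤ h * st := by rw [mul_comm h st]; omega
      exact Nat.le_of_mul_le_mul_left this (by omega)
    obtain ⟨k0, hk0, hk0'⟩ : ∃ k0 ∈ (Finset.range n).filter (fun p => 0 < a p), k0 ≠ 0 := by
      apply Finset.exists_mem_ne
      omega
    rw [Finset.mem_filter, Finset.mem_range] at hk0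
    have hnum := num_main n (a 0) (fun k => if k ≠ 0 ∧ 0 < a k then a k + 1 else 0) (fun _ => 1)
      (fun k => k = 0) (fun k => k ≠ 0 ∧ 0 < a k) rfl (by simp) (by simp) rfl
      (by
        intro k hk
        push Not at hk
        rw [if_neg]
        rintro ⟨h1, h2⟩
        have := hk.2 h1
        omega)
      (by intro k k' _ _ _ h1 _ h2; exact absurd h2 h1)
      (by
        rintro k k' h1 h2 h3 rfl h4
        obtain ⟨M, e1, e2, e3, e4⟩ := (hCD 0 k' h1 h2 h3 h0 h4.2).max (hCD k' 0 h1.symm h3 h2 h4.2 h0).symm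
        refine ⟨M, e1, ?_⟩
        rw [if_pos h4]; omega)
      (by
        intro k k' h1 h2 h3 h4 h5 h6 h7
        have h6' := h6.resolve_left h1
        have h7' := h7.resolve_left h2
        obtain ⟨M, e1, e2, e3, e4⟩ := (hCD k k' h3 h4 h5 h6'.2 h7'.2).max (hCD k' k h3.symm h5 h4 h7'.2 h6'.2).symm
        refine ⟨M, e1, ?_⟩
        rw [if_pos h6', if_pos h7']; omega)
      k0 hk0.1 ⟨hk0', hk0.2⟩
    have hfin : ∑ p ∈ Finset.range n, a p + st =
        ∑ k ∈ Finset.range n, (if k ≠ 0 ∧ 0 < a k then a k + 1 else 0) + (a 0 + 1) := by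
      rw [hst, Finset.card_filter, ← Finset.sum_add_distrib]
      obtain ⟨m, rfl⟩ : ∃ m, n = m + 1 := ⟨n - 1, by omega⟩
      rw [Finset.sum_range_succ', Finset.sum_range_succ']
      have : ∑ k ∈ Finset.range m, (a (k + 1) + if 0 < a (k + 1) then 1 else 0) =
          ∑ k ∈ Finset.range m, (if k + 1 ≠ 0 ∧ 0 < a (k + 1) then a (k + 1) + 1 else 0) := by
        apply Finset.sum_congr rfl
        intro k _
        by_cases h1 : 0 < a (k + 1)
        · rw [if_pos h1, if_pos ⟨by omega, h1⟩]
        · rw [if_neg h1, if_neg (fun h => h1 h.2)]; omega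
      rw [this, if_pos h0]
      simp
    have e1 : h + d - h + 1 = d + 1 := by omega
    rw [e1]
    have : (h + 1) * (d + 1) = h * (d + 1) + (d + 1) := by ring
    omega
  have hs := cnt_sum (n := n) (h := h) (c := c) (fun v hv => by
      obtain ⟨p, hp⟩ := hcov v hv
      exact ⟨p % n, Nat.mod_lt _ (by omega), by rw [per_mod n c hc.per, hp]⟩) hδ f hfs
  have hex : ∃ p0, 0 < cnt G h (fun k => (f k : α)) c p0 := by
    by_contra hcon
    push Not at hcon
    have : ∑ p ∈ Finset.range n, cnt G h (fun k => (f k : α)) c p = 0 :=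
      Finset.sum_eq_zero (fun p _ => Nat.le_zero.1 (hcon p))
    rw [this] at hs
    nlinarith
  obtain ⟨p0, hp0⟩ := hex
  apply key (fun k => c (k + p0)) (hc.shift p0) (fun p => hcs _)
  · intro v hv
    obtain ⟨p, hp⟩ := hcov v hv
    refine ⟨p + p0 * n - p0, ?_⟩
    have h1 : p0 ≤ p0 * n := Nat.le_mul_of_pos_right _ (by omega)
    have h2 : p + p0 * n - p0 + p0 = p + p0 * n := by omega
    rw [h2, ← per_mod n c hc.per, Nat.add_mul_mod_self_right, per_mod n c hc.per, hp]
  · unfold cnt at *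
    simpa using hp0

theorem cycBar_bound (G : SimpleGraph V) [Fintype V] [DecidableRel G.Adj]
    (v : V) (w : G.Walk v v) (hw : IsLongestCycle w) :
    (w.length : ℤ) ≥ (cycBar G w + 1) * ((G.minDegree : ℤ) - cycBar G w + 1) := by
  classical
  obtain ⟨hcyc, hlong⟩ := hw
  have hn3 := hcyc.three_le_length
  have hmax : ∀ l, GCyc G l → l.length ≤ w.length := by
    intro l hl
    by_cases h3 : 3 ≤ l.length
    · obtain ⟨v', w', hw', hlen⟩ := gcyc_walk hl h3
      rw [← hlen]; exact hlong v' w' hw'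
    · omega
  have hδ : ∀ z, G.minDegree ≤ dg G z := by
    intro z
    refine (G.minDegree_le_degree z).trans (le_of_eq ?_)
    rw [← SimpleGraph.card_neighborFinset_eq_degree]
    unfold dg
    congr 1
    ext y
    simp
  have hdirac : G.minDegree + 1 ≤ w.length := by
    obtain ⟨z, l, hl, hlen⟩ := dirac G v
    have := hmax l hl
    have := hδ z
    omega
  set δ := G.minDegree with hδdef
  have hbd : BddAbove {n | ∃ W, ExtCycle (G.induce {x : V | x ∉ w.support}) W n} :=
    ⟨Fintype.card {x : V | x ∉ w.support}, by
      rintro n ⟨W, hW⟩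
      obtain ⟨_, u, hu⟩ := extCycle_cycSeq hW
      exact hu.le_card⟩
  have hhmem : cycBar G w ≠ 0 → cycBar G w ∈
      {n | ∃ W, ExtCycle (G.induce {x : V | x ∉ w.support}) W n} := by
    intro h0
    apply Nat.sSup_mem _ hbd
    by_contra hcon
    rw [Set.not_nonempty_iff_eq_empty] at hcon
    apply h0
    unfold cycBar
    rw [hcon]; simp
  have hmaxR : ∀ l, GCyc (G.induce {x : V | x ∉ w.support}) l → l.length ≤ cycBar G w := by
    intro l hl
    by_cases h1 : 1 ≤ l.length
    · exact le_csSup hbd (gcyc_extCycle hl h1)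
    · omega
  generalize cycBar G w = h at *
  by_cases h0 : h = 0
  · subst h0
    push_cast
    have : ((δ : ℤ) + 1) ≤ w.length := by exact_mod_cast hdirac
    linarith
  obtain ⟨W, hW⟩ := hhmem h0
  obtain ⟨hh, u, hu⟩ := extCycle_cycSeq hW
  rcases lt_trichotomy δ h with hlt | heq | hgt
  · have h1 : (δ : ℤ) - h + 1 ≤ 0 := by
      have : (δ : ℤ) + 1 ≤ h := by exact_mod_cast hlt
      linarith
    have h2 : ((h : ℤ) + 1) * ((δ : ℤ) - h + 1) ≤ 0 :=
      mul_nonpos_of_nonneg_of_nonpos (by positivity) h1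
    have h3 : (0 : ℤ) ≤ w.length := by positivity
    linarith
  · rw [← heq]
    have : ((δ : ℤ) + 1) ≤ w.length := by exact_mod_cast hdirac
    have e1 : ((δ : ℤ) + 1) * ((δ : ℤ) - δ + 1) = δ + 1 := by ring
    linarith
  · obtain ⟨f, hf1, hf2⟩ := spread hu hh hmaxR
    have hfin := final_count (δ := δ) hh (by omega) (by omega) (walk_cycSeq hcyc) hmax (by
        intro p hp
        exact hp (w.getVert_mem_support _)) (by
        intro y hy
        have hy' : y ∈ w.support := by
          by_contra hcon
          exact hy hcon
        obtain ⟨i, hi, hi'⟩ := Walk.mem_support_iff_exists_getVert.1 hy'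
        by_cases hlast : i = w.length
        · refine ⟨0, ?_⟩
          subst hlast
          rw [Walk.getVert_length] at hi
          simp [hi]
        · exact ⟨i, by rw [Nat.mod_eq_of_lt (by omega), hi]⟩) hδ f hf2 hf1
    have h1 : (((h + 1) * (δ - h + 1) : ℕ) : ℤ) ≤ w.length := by exact_mod_cast hfin
    push_cast [Nat.cast_sub hgt.le] at h1
    exact h1
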